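/- arXiv:1209.1916 — 3 statements merged into one kernel-verified Lean document; each statement's English description precedes it below -/
import Mathlib

section
/- Given an ordered multi-pushdown automaton M = (n,Q,Σ,Γ,Δ,q₀,γ₀,F) in normal form with n > 1 stacks, one can construct a generalized pushdown automaton P = (P, Σ', Γ, δ, p₀, ⊥, {p_f}) with state set P = Q ∪ {p₀, p_f} and empty input alphabet Σ' = ∅ such that: (1) L(M) ≠ ∅ if and only if L(P) ≠ ∅; and (2) for all states p₁, p₂ of P and every γ ∈ Γ, there exists an ordered multi-pushdown automaton M_{(p₁,γ,p₂)} with (n−1) stacks over the input alphabet Γ such that L(M_{(p₁,γ,p₂)}) = (δ(p₁,γ,ε,p₂))^R (the set of reversals of the words in δ(p₁,γ,ε,p₂)) and |M_{(p₁,γ,p₂)}| = O(|M|²). -/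
/-!
The generalized pushdown automaton simulates the last stack of the ordered automaton `M`. The last
stack is popped only when all other stacks are empty, so an accepting run of `M` splits at the pops
of the last stack into segments. In a segment the last stack is write-only: the segment is a run of
an automaton on the remaining stacks (`MPA.dropLast`) which *reads* the symbols that `M` pushes on
the last stack. The last stack grows at its top, so the word read by such a run, reversed, is
the word by which the segment replaces the popped symbol `γ`. Defining `δ(p₁,γ,ε,p₂)` as the
reversed language of this automaton makes the language equation hold by construction.

The automaton for `(p₁,γ,p₂)` differs from the transitions inherited from `M` only in its first
transition, prescribed by `MPA.start`: from `inl q` it performs a pop of `γ` from the last stack of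
`M`; from the fresh state `p₀` it sets up the initial configuration of `M`, emitting `⊥` as the
content of the last stack; and from `inl q` with `q` final and `γ = ⊥` it stops at once, which is
how the simulation reaches `p_f`. Equivalence of the emptiness problems is proved by induction on
runs: `MPA.reaches_lift` lifts segments to `M`, `MPA.lang_of_gpa` concatenates them, and
`MPA.gpa_of_reaches` cuts a run of `M` into segments. At most `|Q||Γ| + 1` transitions are new,
whence the size bound.
-/


/-- A run of a labeled transition relation (labels in `A ∪ {ε}`) reading a word. -/
inductive EvalRel {Q A : Type} (Δ : Q → Option A → Q → Prop) : Q → List A → Q → Prop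
  | refl (q : Q) : EvalRel Δ q [] q
  | step {q : Q} {a : Option A} {q' : Q} {w : List A} {q'' : Q} :
      Δ q a q' → EvalRel Δ q' w q'' → EvalRel Δ q (a.toList ++ w) q''

/-- The set of all predecessors (`Pre*`) of `S` under the step relation `r`. -/
def preStar {C : Type} (r : C → C → Prop) (S : Set C) : Set C :=
  {c | ∃ c' ∈ S, Relation.ReflTransGen r c c'}

/-- `Pre⁺ = Pre ∘ Pre*`. -/
def prePlus {C : Type} (r : C → C → Prop) (S : Set C) : Set C :=
  {c | ∃ c₁, r c c₁ ∧ c₁ ∈ preStar r S}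

/-- A multi-pushdown automaton with `n` stacks, states `Q`, input alphabet `A`, and
stack alphabet `Γ` (with distinguished bottom symbol `bot`).  A transition
`Δ q γ a q' α` pops `γ i ∈ Γ ∪ {ε}` from stack `i` and pushes the word `α i` on stack `i`,
for each `i`, reading the input letter `a ∈ A ∪ {ε}`. -/
structure MPA (n : ℕ) (Q A Γ : Type) where
  bot : Γ
  Δ : Q → (Fin n → Option Γ) → Option A → Q → (Fin n → List Γ) → Prop
  q0 : Q
  γ0 : Γ
  F : Set Q

namespace MPA

variable {n : ℕ} {Q A Γ : Type}

/-- A stack content: a word in `(Γ∖{⊥})* ⬝ {⊥}`. -/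
def IsStack (bot : Γ) (w : List Γ) : Prop := ∃ v, w = v ++ [bot] ∧ bot ∉ v

/-- Well-formedness of an MPA: `γ₀ ≠ ⊥`, and each transition pushes at most two symbols on
each stack, never pushes `⊥` on a stack unless it popped `⊥` from it, and when popping `⊥`
from a stack it pushes back `α' ⬝ ⊥` with `α' ∈ (Γ∖{⊥}) ∪ {ε}`. -/
def WF (M : MPA n Q A Γ) : Prop :=
  M.γ0 ≠ M.bot ∧
  ∀ q γ a q' α, M.Δ q γ a q' α → ∀ i : Fin n,
    (α i).length ≤ 2 ∧
    (γ i ≠ some M.bot → M.bot ∉ α i) ∧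
    (γ i = some M.bot → ∃ β, α i = β ++ [M.bot] ∧ M.bot ∉ β ∧ β.length ≤ 1)

/-- An MPA is *ordered* if every transition pops from the first non-empty stack: there is `i`
such that stacks before `i` pop `⊥`, stack `i` pops an element of `Γ ∪ {ε}`, and stacks
after `i` pop nothing. -/
def Ordered (M : MPA n Q A Γ) : Prop :=
  ∀ q γ a q' α, M.Δ q γ a q' α → ∃ i : Fin n,
    (∀ j, j < i → γ j = some M.bot) ∧ (∀ j, i < j → γ j = none)

/-- One transition of the transition system `T(M)`: for each stack `i`, the popped prefix
`γ i` of the stack content is replaced by the pushed word `α i`. -/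
def Step (M : MPA n Q A Γ) (c : Q × (Fin n → List Γ)) (a : Option A)
    (c' : Q × (Fin n → List Γ)) : Prop :=
  ∃ (γ : Fin n → Option Γ) (α w : Fin n → List Γ), M.Δ c.1 γ a c'.1 α ∧
    ∀ i : Fin n, c.2 i = (γ i).toList ++ w i ∧ c'.2 i = α i ++ w i ∧ IsStack M.bot (c.2 i)

/-- A finite run of `T(M)` from `c` to `c'` labelled by the word `τ`. -/
inductive Reaches (M : MPA n Q A Γ) :
    Q × (Fin n → List Γ) → List A → Q × (Fin n → List Γ) → Prop
  | refl (c : Q × (Fin n → List Γ)) : Reaches M c [] c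
  | step {c : Q × (Fin n → List Γ)} {a : Option A} {c' : Q × (Fin n → List Γ)}
      {τ : List A} {c'' : Q × (Fin n → List Γ)} :
      M.Step c a c' → Reaches M c' τ c'' → Reaches M c (a.toList ++ τ) c''

/-- The unlabeled step relation of `T(M)`. -/
def StepAny (M : MPA n Q A Γ) (c c' : Q × (Fin n → List Γ)) : Prop := ∃ a, M.Step c a c'

/-- An ordered MPA (with at least one stack) is in *normal form* if every transition either
(i) pops a symbol from the first stack, pushing at most two symbols on the first stack and at
most one non-`⊥` symbol on each of the other stacks, or (ii) pops a non-`⊥` symbol from some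
stack `i ≥ 2` whose preceding stacks are empty, pushing a single non-`⊥` symbol on the first
stack (and restoring `⊥` on stacks `2,…,i−1`). -/
def NormalForm (M : MPA (n+1) Q A Γ) : Prop :=
  ∀ q γ a q' α, M.Δ q γ a q' α →
    ((∃ g : Γ, γ 0 = some g) ∧ (∀ j, j ≠ 0 → γ j = none) ∧
      (∀ j, j ≠ 0 → (α j).length ≤ 1 ∧ M.bot ∉ α j)) ∨
    (∃ i : Fin (n+1), 0 < i ∧
      (∀ j, j < i → γ j = some M.bot) ∧ (∀ j, i < j → γ j = none) ∧
      (∃ g : Γ, γ i = some g ∧ g ≠ M.bot) ∧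
      (∃ g' : Γ, g' ≠ M.bot ∧ α 0 = [g', M.bot]) ∧
      (∀ j, 0 < j → j < i → α j = [M.bot]) ∧ (∀ j, i ≤ j → α j = []))

/-- The initial stack contents: `γ₀⊥` on the first stack and `⊥` on the others. -/
def init (M : MPA (n+1) Q A Γ) : Fin (n+1) → List Γ :=
  fun i => if i = 0 then [M.γ0, M.bot] else [M.bot]

/-- The language of an MPA: words labelling runs of `T(M)` from `(q₀,γ₀⊥,⊥,…,⊥)` to a final
configuration `(q,⊥,…,⊥)` with `q ∈ F`. -/
def Lang (M : MPA (n+1) Q A Γ) : Set (List A) :=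
  {τ | ∃ q ∈ M.F, M.Reaches (M.q0, M.init) τ (q, fun _ => [M.bot])}

/-- The size `|M| = n + |Q| + |Σ| + |Γ| + |Δ|` of an MPA. -/
noncomputable def size (M : MPA n Q A Γ) : ℕ :=
  n + Nat.card Q + Nat.card A + Nat.card Γ +
    Nat.card {t : Q × (Fin n → Option Γ) × Option A × Q × (Fin n → List Γ) //
      M.Δ t.1 t.2.1 t.2.2.1 t.2.2.2.1 t.2.2.2.2}

end MPA

/-- A generalized pushdown automaton over states `P`, input alphabet `A`, stack alphabet `Γ`. -/
structure GPA (P A Γ : Type) where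
  δ : P → Γ → Option A → P → Set (List Γ)
  p0 : P
  γ0 : Γ
  F : Set P

namespace GPA

variable {P A Γ : Type}

/-- One transition of the transition system `T(P)` of a GPA: being in `(p, γ·w)` and
reading `a`, move to `(p', u·w)` for some `u ∈ δ(p,γ,a,p')`. -/
def Step (M : GPA P A Γ) (c : P × List Γ) (a : Option A) (c' : P × List Γ) : Prop :=
  ∃ γ w u, c.2 = γ :: w ∧ u ∈ M.δ c.1 γ a c'.1 ∧ c'.2 = u ++ w

/-- A finite run of `T(P)` from `c` to `c'` labelled by the word `τ`. -/
inductive Reaches (M : GPA P A Γ) : P × List Γ → List A → P × List Γ → Prop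
  | refl (c : P × List Γ) : Reaches M c [] c
  | step {c : P × List Γ} {a : Option A} {c' : P × List Γ} {τ : List A} {c'' : P × List Γ} :
      M.Step c a c' → Reaches M c' τ c'' → Reaches M c (a.toList ++ τ) c''

/-- The unlabeled step relation of `T(P)`. -/
def StepAny (M : GPA P A Γ) (c c' : P × List Γ) : Prop := ∃ a, M.Step c a c'

/-- The language accepted by a GPA: words labelling runs from `(p₀,γ₀)` to `F × {ε}`. -/
def Lang (M : GPA P A Γ) : Set (List A) :=
  {τ | ∃ p ∈ M.F, M.Reaches (M.p0, [M.γ0]) τ (p, [])}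

end GPA
/-! ### Restricting an ordered automaton to its first stacks -/

namespace MPA

variable {n : ℕ} {Q A Γ : Type}

/-- The automaton on all but the last stack of `M` whose input records the pushes of `M` on the
last stack. It inherits the transitions of `M` that do not pop the last stack. Its initial state
`none` is fresh; the relation `I a s w` lists the permitted first transitions, which read `a`, go to
`s` and replace the initial stack symbol by `w`. -/
def dropLast (M : MPA (n+2) Q A Γ) (I : Option Γ → Option Q → List Γ → Prop)
    (F : Set (Option Q)) : MPA (n+1) (Option Q) Γ Γ where
  bot := M.bot
  Δ s γ a s' α :=
    (∃ q b q' γ' α', s = some q ∧ s' = some q' ∧ M.Δ q γ' b q' α' ∧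
      γ' (Fin.last _) = none ∧ γ = (fun i => γ' i.castSucc) ∧
      α = (fun i => α' i.castSucc) ∧ α' (Fin.last _) = a.toList) ∨
    (s = none ∧ γ = (fun i => if i = 0 then some M.γ0 else none) ∧
      ∃ w, I a s' w ∧ α = fun i => if i = 0 then w else [])
  q0 := none
  γ0 := M.γ0
  F := F

/-- The first transitions of the automaton for `δ(p,γ,ε,·)`: emitting `⊥` and entering the initial
configuration of `M` if `p = p₀` and `γ = ⊥`, stopping in the state `none` if `p` is a final state
of `M` and `γ = ⊥`, and the effect on the first stack of a pop of `γ` from the last stack. -/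
def start (M : MPA (n+2) Q A Γ) (p : Q ⊕ Bool) (γ : Γ) (a : Option Γ) (s : Option Q)
    (w : List Γ) : Prop :=
  match p with
  | .inr false => γ = M.bot ∧ a = some M.bot ∧ s = some M.q0 ∧ w = [M.γ0]
  | .inr true => False
  | .inl q => (γ = M.bot ∧ q ∈ M.F ∧ a = none ∧ s = none ∧ w = []) ∨
      (a = none ∧ ∃ b q' γ' α' g, M.Δ q γ' b q' α' ∧ γ' (Fin.last _) = some γ ∧ s = some q' ∧
        α' 0 = [g, M.bot] ∧ g ≠ M.bot ∧ w = [g])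

/-- The final states of the automaton for `δ(·,γ,ε,p)`. -/
def accepting (p : Q ⊕ Bool) : Set (Option Q) :=
  match p with
  | .inl q => {some q}
  | .inr true => {none}
  | .inr false => ∅

/-- The automaton whose language is the reversal of `δ(p₁,γ,ε,p₂)`. -/
def segment (M : MPA (n+2) Q A Γ) (p₁ : Q ⊕ Bool) (γ : Γ) (p₂ : Q ⊕ Bool) :
    MPA (n+1) (Option Q) Γ Γ :=
  M.dropLast (M.start p₁ γ) (accepting p₂)

/-- The generalized pushdown automaton simulating the last stack of `M`, with `p₀ = inr false` and
`p_f = inr true`. -/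
def toGPA (M : MPA (n+2) Q A Γ) : GPA (Q ⊕ Bool) Empty Γ where
  δ p₁ γ _ p₂ := {u | u.reverse ∈ (M.segment p₁ γ p₂).Lang}
  p0 := .inr false
  γ0 := M.bot
  F := {.inr true}

theorem Reaches.inv {m : ℕ} {M : MPA m Q A Γ} {c c' : Q × (Fin m → List Γ)} {τ : List A}
    (h : M.Reaches c τ c') :
    (c = c' ∧ τ = []) ∨ ∃ a d τ', M.Step c a d ∧ M.Reaches d τ' c' ∧ τ = a.toList ++ τ' := by
  cases h with
  | refl => exact .inl ⟨rfl, rfl⟩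
  | step h₁ h₂ => exact .inr ⟨_, _, _, h₁, h₂, rfl⟩

theorem Reaches.trans {m : ℕ} {M : MPA m Q A Γ} {c c' c'' : Q × (Fin m → List Γ)}
    {τ τ' : List A} (h : M.Reaches c τ c') (h' : M.Reaches c' τ' c'') :
    M.Reaches c (τ ++ τ') c'' := by
  induction h with
  | refl => exact h'
  | step h₁ _ ih => rw [List.append_assoc]; exact .step h₁ (ih h')

theorem isStack_bot (b : Γ) : IsStack b [b] := ⟨[], rfl, by simp⟩

theorem isStack_append {b : Γ} {v w : List Γ} (hv : b ∉ v) (hw : IsStack b w) :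
    IsStack b (v ++ w) := by
  obtain ⟨x, rfl, hx⟩ := hw
  exact ⟨v ++ x, by simp, by simp [hv, hx]⟩

theorem isStack_cons_bot {b : Γ} {w : List Γ} (h : IsStack b (b :: w)) : w = [] := by
  obtain ⟨x, hx, hb⟩ := h
  cases x with
  | nil => simpa using hx
  | cons y ys => simp only [List.cons_append, List.cons.injEq] at hx; simp [hx.1] at hb

theorem isStack_tail {b g : Γ} {w : List Γ} (h : IsStack b (g :: w)) (hg : g ≠ b) :
    IsStack b w := by
  obtain ⟨x, hx, hb⟩ := h
  cases x with
  | nil => simp at hx; exact absurd hx.1 hg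
  | cons y ys =>
    simp only [List.cons_append, List.cons.injEq] at hx
    exact ⟨ys, hx.2, fun h => hb (List.mem_cons_of_mem _ h)⟩

/-- A transition of a normal-form automaton that pops the last stack is of the second kind. -/
theorem NormalForm.pop_last {M : MPA (n+2) Q A Γ} (hN : M.NormalForm) {q q' : Q} {b : Option A}
    {γ : Fin (n+2) → Option Γ} {α : Fin (n+2) → List Γ} (h : M.Δ q γ b q' α) {g : Γ}
    (hg : γ (Fin.last _) = some g) :
    g ≠ M.bot ∧ (∀ i : Fin (n+1), γ i.castSucc = some M.bot) ∧
      (∃ g', g' ≠ M.bot ∧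
        ∀ i : Fin (n+1), α i.castSucc = if i = 0 then [g', M.bot] else [M.bot]) ∧
      α (Fin.last _) = [] := by
  rcases hN q γ b q' α h with ⟨_, h2, _⟩ | ⟨i, h0, h1, h2, ⟨g₁, hg₁, hb⟩, ⟨g', hg', h0'⟩, h3, h4⟩
  · rw [h2 _ (Fin.last_pos.ne')] at hg
    cases hg
  · have hi : i = Fin.last _ := by
      by_contra hi
      rw [h2 _ (Fin.lt_last_iff_ne_last.2 hi)] at hg
      cases hg
    subst hi
    rw [hg₁] at hg
    cases hg
    refine ⟨hb, fun i => h1 _ (Fin.castSucc_lt_last i), ⟨g', hg', fun i => ?_⟩, h4 _ le_rfl⟩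
    split_ifs with hi
    · subst hi; simpa using h0'
    · refine h3 _ ?_ (Fin.castSucc_lt_last i)
      rw [← Fin.castSucc_zero]
      exact Fin.castSucc_lt_castSucc_iff.2 (Fin.pos_of_ne_zero hi)

/-- A transition of a normal-form automaton pushes at most one symbol on the last stack. -/
theorem NormalForm.push_last {M : MPA (n+2) Q A Γ} (hN : M.NormalForm) {q q' : Q} {b : Option A}
    {γ : Fin (n+2) → Option Γ} {α : Fin (n+2) → List Γ} (h : M.Δ q γ b q' α) :
    ∃ a : Option Γ, α (Fin.last _) = a.toList := by
  have key : (α (Fin.last _)).length ≤ 1 := by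
    rcases hN q γ b q' α h with ⟨_, _, h2⟩ | ⟨i, _, _, _, _, _, _, h4⟩
    · exact (h2 _ (Fin.last_pos.ne')).1
    · simp [h4 _ (Fin.le_last i)]
  rcases hα : α (Fin.last _) with _ | ⟨x, _ | ⟨y, ys⟩⟩
  · exact ⟨none, rfl⟩
  · exact ⟨some x, rfl⟩
  · simp [hα] at key

/-! ### Well-formedness and size -/

theorem start_wf (M : MPA (n+2) Q A Γ) (hW : M.WF) {p : Q ⊕ Bool} {γ : Γ} {a : Option Γ}
    {s : Option Q} {w : List Γ} (h : M.start p γ a s w) : w.length ≤ 1 ∧ M.bot ∉ w := by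
  rcases p with q | _ | _
  · rcases h with ⟨-, -, -, -, rfl⟩ | ⟨-, b, q', γ', α', g, -, -, -, -, hg, rfl⟩
    · simp
    · simp [hg.symm]
  · obtain ⟨-, -, -, rfl⟩ := h
    simp [hW.1.symm]
  · exact h.elim

theorem segment_wf (M : MPA (n+2) Q A Γ) (hW : M.WF) (p₁ : Q ⊕ Bool) (γ : Γ) (p₂ : Q ⊕ Bool) :
    (M.segment p₁ γ p₂).WF := by
  refine ⟨hW.1, ?_⟩
  rintro s γ₁ a s' α (⟨q, b, q', γ', α', rfl, rfl, h, -, rfl, rfl, -⟩ | ⟨-, rfl, w, hw, rfl⟩) i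
  · exact hW.2 _ _ _ _ _ h _
  · obtain ⟨hl, hb⟩ := M.start_wf hW hw
    have hbot : (M.segment p₁ γ p₂).bot = M.bot := rfl
    rw [hbot]
    by_cases hi : i = 0
    · simp only [hi, if_true]
      exact ⟨by omega, fun _ => hb, fun h => absurd (Option.some.inj h) hW.1⟩
    · simp [hi]

theorem segment_ordered (M : MPA (n+2) Q A Γ) (hO : M.Ordered) (p₁ : Q ⊕ Bool) (γ : Γ)
    (p₂ : Q ⊕ Bool) : (M.segment p₁ γ p₂).Ordered := by
  rintro s γ₁ a s' α (⟨q, b, q', γ', α', rfl, rfl, h, -, rfl, rfl, -⟩ | ⟨-, rfl, -⟩)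
  · obtain ⟨i, h1, h2⟩ := hO _ _ _ _ _ h
    induction i using Fin.lastCases with
    | last =>
      -- nothing at all is popped from the last stack, so stack `n` may play the role of `i`
      exact ⟨Fin.last _, fun j _ => h1 _ (Fin.castSucc_lt_last j),
        fun j hj => absurd hj (Fin.le_last j).not_gt⟩
    | cast i =>
      exact ⟨i, fun j hj => h1 _ (Fin.castSucc_lt_castSucc_iff.2 hj),
        fun j hj => h2 _ (Fin.castSucc_lt_castSucc_iff.2 hj)⟩
  · exact ⟨0, fun j hj => absurd hj (Fin.zero_le j).not_gt, fun j hj => by simp [hj.ne']⟩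

/-- The set of transitions of an automaton, whose cardinality enters its size. -/
def transitions {m : ℕ} (M : MPA m Q A Γ) :
    Set (Q × (Fin m → Option Γ) × Option A × Q × (Fin m → List Γ)) :=
  {t | M.Δ t.1 t.2.1 t.2.2.1 t.2.2.2.1 t.2.2.2.2}

theorem size_eq {m : ℕ} (M : MPA m Q A Γ) :
    M.size = m + Nat.card Q + Nat.card A + Nat.card Γ + M.transitions.ncard := rfl

/-- Well-formedness bounds the pushed words, so there are finitely many transitions. In particular
`size` does not involve the cardinality of an infinite type. -/
theorem transitions_finite {m : ℕ} [Finite Q] [Finite A] [Finite Γ] (M : MPA m Q A Γ)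
    (hW : M.WF) : M.transitions.Finite := by
  have hL : {α : Fin m → List Γ | ∀ i, α i ∈ {l : List Γ | l.length ≤ 2}}.Finite :=
    Set.Finite.pi' fun _ => List.finite_length_le Γ 2
  refine Set.Finite.subset (Set.finite_univ.prod (Set.finite_univ.prod
    (Set.finite_univ.prod (Set.finite_univ.prod hL)))) ?_
  rintro ⟨q, γ, a, q', α⟩ h
  exact ⟨trivial, trivial, trivial, trivial, fun i => (hW.2 _ _ _ _ _ h i).1⟩

/-- For a fixed state and symbol, the permitted first transitions are parametrized by the pairs of
a target state and a pushed symbol, plus one extra value. -/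
theorem start_param (M : MPA (n+2) Q A Γ) (p : Q ⊕ Bool) (γ : Γ) :
    ∃ e : Option (Q × Γ) → Option Γ × Option Q × List Γ,
      ∀ a s w, M.start p γ a s w → (a, s, w) ∈ Set.range e := by
  rcases p with q | _ | _
  · refine ⟨fun o => o.elim (none, none, []) fun x => (none, some x.1, [x.2]), ?_⟩
    rintro a s w (⟨-, -, rfl, rfl, rfl⟩ | ⟨rfl, b, q', γ', α', g, -, -, rfl, -, -, rfl⟩)
    · exact ⟨none, rfl⟩
    · exact ⟨some (q', g), rfl⟩
  · refine ⟨fun _ => (some M.bot, some M.q0, [M.γ0]), ?_⟩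
    rintro a s w ⟨-, rfl, rfl, rfl⟩
    exact ⟨none, rfl⟩
  · exact ⟨fun _ => (none, none, []), fun _ _ _ h => h.elim⟩

theorem segment_size [Finite Q] [Finite A] [Finite Γ] (M : MPA (n+2) Q A Γ) (hW : M.WF)
    (p₁ : Q ⊕ Bool) (γ : Γ) (p₂ : Q ⊕ Bool) : (M.segment p₁ γ p₂).size ≤ 4 * M.size ^ 2 := by
  obtain ⟨e, he⟩ := M.start_param p₁ γ
  let f : Q × (Fin (n+2) → Option Γ) × Option A × Q × (Fin (n+2) → List Γ) →
      Option Q × (Fin (n+1) → Option Γ) × Option Γ × Option Q × (Fin (n+1) → List Γ) :=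
    fun t => (some t.1, fun i => t.2.1 i.castSucc, (t.2.2.2.2 (Fin.last _)).head?,
      some t.2.2.2.1, fun i => t.2.2.2.2 i.castSucc)
  let g : Option (Q × Γ) →
      Option Q × (Fin (n+1) → Option Γ) × Option Γ × Option Q × (Fin (n+1) → List Γ) :=
    fun o => (none, fun i => if i = 0 then some M.γ0 else none, (e o).1, (e o).2.1,
      fun i => if i = 0 then (e o).2.2 else [])
  have hfin := M.transitions_finite hW
  have hsub : (M.segment p₁ γ p₂).transitions ⊆ f '' M.transitions ∪ g '' Set.univ := by
    rintro ⟨s, γ₁, a, s', α⟩ h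
    rcases h with ⟨q, b, q', γ', α', hs, hs', h, -, hγ, hα, ha⟩ | ⟨hs, hγ, w, hw, hα⟩
    · refine .inl ⟨(q, γ', b, q', α'), h, ?_⟩
      simp only at hs hs' hγ hα ha
      simp only [f, ha, hs, hs', hγ, hα]
      cases a <;> rfl
    · obtain ⟨o, ho⟩ := he _ _ _ hw
      refine .inr ⟨o, trivial, ?_⟩
      simp only at hs hγ hα ho
      simp only [g, ho, hs, hγ, hα]
  have h1 := Set.ncard_le_ncard hsub ((hfin.image f).union (Set.finite_univ.image g))
  have h2 := Set.ncard_union_le (f '' M.transitions) (g '' Set.univ)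
  have h3 := Set.ncard_image_le (f := f) hfin
  have h4 := Set.ncard_image_le (f := g) Set.finite_univ
  rw [Set.ncard_univ, Finite.card_option, Nat.card_prod] at h4
  rw [size_eq, size_eq, Finite.card_option]
  generalize (M.segment p₁ γ p₂).transitions.ncard = D' at *
  generalize M.transitions.ncard = D at *
  generalize Nat.card Q = x at *
  generalize Nat.card Γ = y at *
  generalize Nat.card A = z at *
  set S := n + 2 + x + z + y + D with hS
  have h5 : n + 1 + (x + 1) + y + y + D' ≤ 2 * S + x * y + 1 := by omega
  have h6 : x * y ≤ S * S := Nat.mul_le_mul (by omega) (by omega)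
  have h7 : 2 ≤ S := by omega
  nlinarith

/-! ### From the generalized pushdown automaton to the ordered automaton -/

/-- A stack content of `M` from the contents of the first stacks and that of the last one. -/
def glue (s : Fin (n+1) → List Γ) (w : List Γ) : Fin (n+2) → List Γ :=
  Fin.snoc (α := fun _ => List Γ) s w

@[simp] theorem glue_castSucc (s : Fin (n+1) → List Γ) (w : List Γ) (i : Fin (n+1)) :
    glue s w i.castSucc = s i := by simp [glue]

@[simp] theorem glue_last (s : Fin (n+1) → List Γ) (w : List Γ) :
    glue s w (Fin.last _) = w := by simp [glue]

theorem glue_init (s : Fin (n+2) → List Γ) :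
    glue (fun i => s i.castSucc) (s (Fin.last _)) = s := by
  funext i
  induction i using Fin.lastCases <;> simp

/-- Once the fresh initial state is left, a run of the restricted automaton lifts to a run of `M`
that pushes the word read, letter by letter, on top of the last stack. -/
theorem reaches_lift (M : MPA (n+2) Q A Γ) (hW : M.WF)
    {I : Option Γ → Option Q → List Γ → Prop} {F : Set (Option Q)}
    {c c' : Option Q × (Fin (n+1) → List Γ)} {τ : List Γ}
    (h : (M.dropLast I F).Reaches c τ c') :
    ∀ q, c.1 = some q → ∃ q', c'.1 = some q' ∧ M.bot ∉ τ ∧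
      ∀ w, IsStack M.bot w →
        ∃ σ, M.Reaches (q, glue c.2 w) σ (q', glue c'.2 (τ.reverse ++ w)) := by
  induction h with
  | refl c => exact fun q hq => ⟨q, hq, by simp, fun w _ => ⟨[], .refl _⟩⟩
  | @step c a d τ c' h₁ _ ih =>
    intro q hq
    obtain ⟨γ, α, v, hΔ, hs⟩ := h₁
    rcases hΔ with ⟨q₁, b, q₂, γ', α', h1, h2, hΔ, hl, rfl, rfl, ha⟩ | ⟨h1, -⟩
    swap
    · simp [hq] at h1
    obtain rfl : q = q₁ := by simpa [hq] using h1
    obtain ⟨q', hq', hτ, hr⟩ := ih q₂ h2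
    have hb : M.bot ∉ a.toList := by
      rw [← ha]
      exact (hW.2 _ _ _ _ _ hΔ _).2.1 (by simp [hl])
    refine ⟨q', hq', by simp only [List.mem_append, not_or]; exact ⟨hb, hτ⟩, fun w hw => ?_⟩
    obtain ⟨σ, hσ⟩ := hr (a.toList ++ w) (isStack_append hb hw)
    have harev : a.toList.reverse = a.toList := by cases a <;> rfl
    refine ⟨b.toList ++ σ, .step (c' := (q₂, glue d.2 (a.toList ++ w)))
      ⟨γ', α', glue v w, hΔ, fun i => ?_⟩ ?_⟩
    · induction i using Fin.lastCases with
      | last => simpa [hl, ha] using hw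
      | cast i => simpa [dropLast] using hs i
    · simpa [harev] using hσ

/-- The first step of a segment. -/
theorem step_init (M : MPA (n+2) Q A Γ)
    {I : Option Γ → Option Q → List Γ → Prop} {F : Set (Option Q)} {a : Option Γ}
    {d : Option Q × (Fin (n+1) → List Γ)} :
    (M.dropLast I F).Step ((M.dropLast I F).q0, (M.dropLast I F).init) a d ↔
      M.γ0 ≠ M.bot ∧
      ∃ w, I a d.1 w ∧ d.2 = fun i => if i = 0 then w ++ [M.bot] else [M.bot] := by
  constructor
  · rintro ⟨γ, α, v, hΔ, hs⟩
    rcases hΔ with ⟨q₁, b, q₂, γ', α', h1, -⟩ | ⟨-, rfl, w, hw, rfl⟩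
    · cases h1
    · refine ⟨?_, w, hw, funext fun i => ?_⟩
      · intro h
        have := (hs 0).2.2
        simp only [init, dropLast, if_true, h] at this
        simpa using isStack_cons_bot this
      · obtain ⟨h1, h2, -⟩ := hs i
        rw [h2]
        by_cases hi : i = 0
        · subst hi
          simp [init, dropLast] at h1
          simp [← h1]
        · simp [init, dropLast, hi] at h1
          simp [hi, ← h1]
  · rintro ⟨h0, w, hw, hd⟩
    refine ⟨fun i => if i = 0 then some M.γ0 else none, fun i => if i = 0 then w else [],
      fun _ => [M.bot], .inr ⟨rfl, rfl, w, hw, rfl⟩, fun i => ?_⟩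
    by_cases hi : i = 0
    · subst hi
      refine ⟨by simp [init, dropLast], by simp [hd], ?_⟩
      simpa [init, dropLast] using
        isStack_append (v := [M.γ0]) (by simpa using h0.symm) (isStack_bot M.bot)
    · refine ⟨by simp [init, dropLast, hi], by simp [hd, hi], ?_⟩
      simpa [init, dropLast, hi] using isStack_bot M.bot

/-- The language of a restricted automaton in terms of what follows the first step. -/
theorem mem_lang_iff (M : MPA (n+2) Q A Γ) (hW : M.WF)
    {I : Option Γ → Option Q → List Γ → Prop} {F : Set (Option Q)} {τ : List Γ} :
    τ ∈ (M.dropLast I F).Lang ↔ ∃ a s w τ', I a s w ∧ τ = a.toList ++ τ' ∧ ∃ s' ∈ F,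
      (M.dropLast I F).Reaches (s, fun i => if i = 0 then w ++ [M.bot] else [M.bot]) τ'
        (s', fun _ => [M.bot]) := by
  constructor
  · rintro ⟨s', hs', h⟩
    rcases h.inv with ⟨h, -⟩ | ⟨a, ⟨s, d⟩, τ', h1, h2, rfl⟩
    -- a run without steps would have to start with an empty first stack
    · have := congrFun (congrArg Prod.snd h) 0
      simp [init] at this
    · obtain ⟨-, w, hw, hd⟩ := M.step_init.1 h1
      simp only at hw hd
      subst hd
      exact ⟨a, s, w, τ', hw, rfl, s', hs', h2⟩
  · rintro ⟨a, s, w, τ', hw, rfl, s', hs', h⟩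
    exact ⟨s', hs', .step (M.step_init.2 ⟨hW.1, w, hw, rfl⟩) h⟩

/-- A run of the generalized pushdown automaton from `(q, w)` to `(p_f, ε)` yields an accepting
run of `M` from `q` with `w` on the last stack and all other stacks empty. -/
theorem lang_of_gpa (M : MPA (n+2) Q A Γ) (hW : M.WF) (hN : M.NormalForm)
    {c c' : (Q ⊕ Bool) × List Γ} {τ : List Empty} (h : M.toGPA.Reaches c τ c') :
    c'.1 = .inr true → ∀ q, c.1 = .inl q → IsStack M.bot c.2 →
      ∃ qf ∈ M.F, ∃ σ, M.Reaches (q, glue (fun _ => [M.bot]) c.2) σ (qf, fun _ => [M.bot]) := by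
  induction h with
  | refl c => intro h q hq; simp [hq] at h
  | @step c a d τ c' h₁ _ ih =>
    intro hc' q hq hst
    obtain ⟨γ, w, u, hw, hu, hd⟩ := h₁
    rw [hq] at hu
    obtain ⟨a, s, v, τ', hI, hτ, s', hs', hr⟩ := (M.mem_lang_iff hW).1 hu
    rw [hw] at hst
    rcases hI with ⟨rfl, hqF, rfl, rfl, rfl⟩ |
      ⟨rfl, b, q', γ', α', g, hΔ, hγ', rfl, hα', hg, rfl⟩
    · obtain rfl := isStack_cons_bot hst
      refine ⟨q, hqF, [], ?_⟩
      rw [hw]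
      convert Reaches.refl _
      rename_i i
      induction i using Fin.lastCases <;> simp
    · obtain ⟨hγ, hpop, ⟨g', hg', hpush⟩, hlast⟩ := hN.pop_last hΔ hγ'
      obtain rfl : g' = g := by
        have := hpush 0
        rw [Fin.castSucc_zero, hα'] at this
        simpa using this.symm
      obtain ⟨q'', hq'', hbot, hlift⟩ := M.reaches_lift hW hr q' rfl
      simp only at hq''
      subst hq''
      have hstw := isStack_tail hst hγ
      obtain ⟨σ, hσ⟩ := hlift w hstw
      have hd1 : d.1 = .inl q'' := by
        rcases hp : d.1 with p | _ | _
        · rw [hp] at hs'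
          exact congrArg _ (Option.some.inj hs').symm
        · rw [hp] at hs'
          exact hs'.elim
        · rw [hp] at hs'
          cases hs'
      have hu' : u = τ'.reverse := by
        rw [← List.reverse_reverse u, hτ]
        rfl
      obtain ⟨qf, hqf, σ', hσ'⟩ := ih hc' q'' hd1
        (by rw [hd, hu']; exact isStack_append (by simpa using hbot) hstw)
      rw [hd, hu'] at hσ'
      refine ⟨qf, hqf, b.toList ++ (σ ++ σ'), .step (c' := (q', _)) ?_ (hσ.trans hσ')⟩
      refine ⟨γ', α', glue (fun _ => []) w, hΔ, fun i => ?_⟩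
      induction i using Fin.lastCases with
      | last => simpa [hw, hγ', hlast] using hst
      | cast i =>
        refine ⟨by simp [hpop], ?_, by simpa using isStack_bot M.bot⟩
        by_cases hi : i = 0 <;> simp only [glue_castSucc, hpush, hi] <;> simp

/-! ### From the ordered automaton to the generalized pushdown automaton -/

/-- A run of `M` to a final configuration first follows a segment, which empties all stacks but the
last and does not pop the last stack; what is left is simulated by the generalized pushdown
automaton. -/
theorem gpa_of_reaches (M : MPA (n+2) Q A Γ) (hW : M.WF) (hN : M.NormalForm)
    {c c' : Q × (Fin (n+2) → List Γ)} {σ : List A} (h : M.Reaches c σ c') :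
    c'.1 ∈ M.F → c'.2 = (fun _ => [M.bot]) →
      ∃ q₁ τ, (∀ I F, (M.dropLast I F).Reaches (some c.1, fun i => c.2 i.castSucc) τ
          (some q₁, fun _ => [M.bot])) ∧
        ∃ ρ, M.toGPA.Reaches (.inl q₁, τ.reverse ++ c.2 (Fin.last _)) ρ (.inr true, []) := by
  induction h with
  | refl c =>
    intro hF hc
    refine ⟨c.1, [], fun I F => ?_, _, .step (a := none) (c' := (.inr true, [])) ?_ (.refl _)⟩
    · simp only [hc]
      exact .refl _
    · refine ⟨M.bot, [], [], by simp [hc], ?_, rfl⟩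
      refine (M.mem_lang_iff hW).2 ⟨none, none, [], [], .inl ⟨rfl, hF, rfl, rfl, rfl⟩, rfl,
        none, rfl, ?_⟩
      simpa using Reaches.refl (M := M.dropLast _ _) _
  | @step c b d σ c' h₁ _ ih =>
    intro hF hc
    obtain ⟨q₁, τ, hτ, ρ, hρ⟩ := ih hF hc
    obtain ⟨γ, α, v, hΔ, hs⟩ := h₁
    rcases hγ : γ (Fin.last _) with _ | g
    · obtain ⟨a, ha⟩ := hN.push_last hΔ
      refine ⟨q₁, a.toList ++ τ, fun I F => .step
        ⟨fun i => γ i.castSucc, fun i => α i.castSucc, fun i => v i.castSucc,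
          .inl ⟨_, b, _, γ, α, rfl, rfl, hΔ, hγ, rfl, rfl, ha⟩, fun i => hs i.castSucc⟩ (hτ I F),
        ρ, ?_⟩
      obtain ⟨h1, h2, -⟩ := hs (Fin.last _)
      rw [hγ] at h1
      have harev : a.toList.reverse = a.toList := by cases a <;> rfl
      have h3 : c.2 (Fin.last _) = v (Fin.last _) := h1
      rw [List.reverse_append, harev, List.append_assoc, h3, ← ha, ← h2]
      exact hρ
    -- the last stack is popped: the segment that ends here is empty
    · obtain ⟨hg, hpop, ⟨g', hg', hpush⟩, hlast⟩ := hN.pop_last hΔ hγ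
      have hv : ∀ i : Fin (n+1), v i.castSucc = [] := by
        intro i
        obtain ⟨h1, -, h3⟩ := hs i.castSucc
        rw [hpop] at h1
        rw [h1] at h3
        exact isStack_cons_bot h3
      obtain ⟨h1, h2, -⟩ := hs (Fin.last _)
      rw [hγ] at h1
      rw [hlast] at h2
      refine ⟨c.1, [], fun I F => ?_, _, .step (a := none) ?_ hρ⟩
      · have : (fun i : Fin (n+1) => c.2 i.castSucc) = fun _ => [M.bot] := by
          funext i
          rw [(hs i.castSucc).1, hpop, hv]
          rfl
        rw [this]
        exact .refl _
      · refine ⟨g, v (Fin.last _), τ.reverse, h1, ?_, by rw [h2]; rfl⟩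
        refine (M.mem_lang_iff hW).2 ⟨none, some d.1, [g'], τ, .inr ⟨rfl, b, d.1, γ, α, g', hΔ, hγ,
          rfl, ?_, hg', rfl⟩, by simp, some q₁, rfl, ?_⟩
        · have := hpush 0
          rwa [Fin.castSucc_zero] at this
        · have : (fun i : Fin (n+1) => d.2 i.castSucc) =
              fun i => if i = 0 then [g'] ++ [M.bot] else [M.bot] := by
            funext i
            rw [(hs i.castSucc).2.1, hpush, hv]
            simp
          rw [← this]
          exact hτ _ _

theorem init_castSucc (M : MPA (n+2) Q A Γ) :
    (fun i : Fin (n+1) => M.init i.castSucc) =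
      fun i => if i = 0 then [M.γ0] ++ [M.bot] else [M.bot] := by
  funext i
  by_cases hi : i = 0 <;> simp [init, hi]

theorem init_last (M : MPA (n+2) Q A Γ) : M.init (Fin.last _) = [M.bot] := by
  simp [init]

theorem lang_nonempty_iff (M : MPA (n+2) Q A Γ) (hW : M.WF) (hN : M.NormalForm) :
    M.Lang.Nonempty ↔ M.toGPA.Lang.Nonempty := by
  constructor
  · rintro ⟨σ, qf, hqf, h⟩
    obtain ⟨q₁, τ, hτ, ρ, hρ⟩ := M.gpa_of_reaches hW hN h hqf rfl
    simp only [init_last, init_castSucc] at hτ hρ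
    refine ⟨_, _, rfl, .step (a := none) ?_ hρ⟩
    refine ⟨M.bot, [], τ.reverse ++ [M.bot], rfl, ?_, by simp⟩
    exact (M.mem_lang_iff hW).2 ⟨some M.bot, some M.q0, [M.γ0], τ, ⟨rfl, rfl, rfl, rfl⟩,
      by simp, some q₁, rfl, hτ _ _⟩
  · rintro ⟨ρ, p, hp, h⟩
    obtain rfl : p = .inr true := hp
    cases h with
    | @step _ a d ρ' _ h₁ h₂ =>
      obtain ⟨γ, w, u, hw, hu, hd⟩ := h₁
      obtain ⟨rfl, rfl⟩ : M.bot = γ ∧ [] = w := by simpa [toGPA] using hw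
      obtain ⟨a, s, v, τ', hI, hτ, s', hs', hr⟩ := (M.mem_lang_iff hW).1 hu
      obtain ⟨-, rfl, rfl, rfl⟩ := hI
      obtain ⟨q'', hq'', hbot, hlift⟩ := M.reaches_lift hW hr _ rfl
      simp only at hq''
      subst hq''
      have hd1 : d.1 = .inl q'' := by
        rcases hp : d.1 with p | _ | _
        · rw [hp] at hs'
          exact congrArg _ (Option.some.inj hs').symm
        · rw [hp] at hs'
          exact hs'.elim
        · rw [hp] at hs'
          cases hs'
      have hd2 : d.2 = τ'.reverse ++ [M.bot] := by
        rw [hd, ← List.reverse_reverse u, hτ]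
        simp
      obtain ⟨σ, hσ⟩ := hlift [M.bot] (isStack_bot _)
      obtain ⟨qf, hqf, σ', hσ'⟩ := M.lang_of_gpa hW hN h₂ rfl q'' hd1
        (by rw [hd2]; exact isStack_append (by simpa using hbot) (isStack_bot _))
      rw [hd2] at hσ'
      refine ⟨σ ++ σ', qf, hqf, ?_⟩
      have := hσ.trans hσ'
      rwa [← init_castSucc, ← init_last M, glue_init] at this

end MPA

/-- From an ordered MPA `M` in normal form with `n > 1` stacks one can
construct a GPA `P` with states `Q ∪ {p₀,p_f}` and empty input alphabet such that
`L(M) ≠ ∅ ↔ L(P) ≠ ∅`, and each pushed language `δ(p₁,γ,ε,p₂)` is the reversal of the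
language of an `(n−1)`-stack ordered MPA over `Γ` of size `O(|M|²)`. -/
theorem ompa_to_gpa :
    ∃ c : ℕ, 0 < c ∧
      ∀ (n : ℕ) (Q A Γ : Type) (_ : Finite Q) (_ : Finite A) (_ : Finite Γ)
        (M : MPA (n+2) Q A Γ), M.WF → M.Ordered → M.NormalForm →
        ∃ (P : GPA (Q ⊕ Bool) Empty Γ),
          P.p0 = Sum.inr false ∧ P.γ0 = M.bot ∧ P.F = {Sum.inr true} ∧
          (M.Lang ≠ ∅ ↔ P.Lang ≠ ∅) ∧
          ∀ (p₁ p₂ : Q ⊕ Bool) (γ : Γ),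
            ∃ (Q'' : Type) (_ : Finite Q'') (M'' : MPA (n+1) Q'' Γ Γ),
              M''.WF ∧ M''.Ordered ∧
              M''.Lang = {u : List Γ | u.reverse ∈ P.δ p₁ γ none p₂} ∧
              M''.size ≤ c * M.size ^ 2 := by
  refine ⟨4, by norm_num, ?_⟩
  intro n Q A Γ _ _ _ M hW hO hN
  refine ⟨M.toGPA, rfl, rfl, rfl, ?_, fun p₁ p₂ γ => ⟨Option Q, inferInstance,
    M.segment p₁ γ p₂, M.segment_wf hW p₁ γ p₂, M.segment_ordered hO p₁ γ p₂, ?_,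
    M.segment_size hW p₁ γ p₂⟩⟩
  · rw [← Set.nonempty_iff_ne_empty, ← Set.nonempty_iff_ne_empty]
    exact M.lang_nonempty_iff hW hN
  · ext u
    simp [MPA.toGPA]
end

section
/- Let M = (n,Q,Σ,Γ,Δ,q₀,γ₀,F) be an ordered multi-pushdown automaton and A an M-automaton. Then one can construct an ordered multi-pushdown automaton M' = (n, Q' ∪ {q_f}, Σ, Γ', Δ', q₀, γ₀, F) with Q ⊆ Q', q_f ∉ Q', and |M'| = O(|M| · |A|), such that for every configuration c of M: c ∈ Pre*_{T(M)}(L_M(A)) if and only if c ∈ Pre*_{T(M')}({(q_f,⊥,…,⊥)}). -/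
/-- An `M`-automaton: a finite automaton over the stack alphabet `Γ` whose set of initial
states is the set `Q` of states of the MPA (plus possibly extra states `S`). -/
structure MAut (Γ Q S : Type) where
  Δ : (Q ⊕ S) → Option Γ → (Q ⊕ S) → Prop
  F : Set (Q ⊕ S)

/-- The configuration `(q, w₁, …, wₙ)` of `M` is accepted by the `M`-automaton `T`:
all stacks are proper stack contents and the word `w₁w₂⋯wₙ` is accepted by `T` started
from the initial state `q`. -/
def MAut.AcceptConf {n : ℕ} {Q A Γ S : Type} (M : MPA n Q A Γ) (T : MAut Γ Q S)
    (c : Q × (Fin n → List Γ)) : Prop :=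
  (∀ i, MPA.IsStack M.bot (c.2 i)) ∧
  ∃ f ∈ T.F, EvalRel T.Δ (Sum.inl c.1) (List.ofFn c.2).flatten f

/-- The size of an `M`-automaton: numbers of states, alphabet symbols and transitions. -/
noncomputable def MAut.size {Γ Q S : Type} (T : MAut Γ Q S) : ℕ :=
  Nat.card (Q ⊕ S) + Nat.card Γ +
    Nat.card {t : (Q ⊕ S) × Option Γ × (Q ⊕ S) // T.Δ t.1 t.2.1 t.2.2}

open Relation

namespace MPA

variable {n : ℕ} {Q A Γ S : Type}

/-! ### Renaming the stack alphabet -/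

/-- The MPA obtained from `M` by renaming its stack symbols along the bijection `e`. -/
def mapSyms {Γ' : Type} (M : MPA n Q A Γ) (e : Γ ≃ Γ') : MPA n Q A Γ' where
  bot := e M.bot
  Δ q γ a q' α := M.Δ q (fun i => (γ i).map e.symm) a q' (fun i => (α i).map e.symm)
  q0 := M.q0
  γ0 := e M.γ0
  F := M.F

/-- The configuration obtained by renaming stack symbols along `e`. -/
def relConf {Γ' : Type} (e : Γ → Γ') (c : Q × (Fin n → List Γ)) : Q × (Fin n → List Γ') :=
  (c.1, fun i => (c.2 i).map e)

theorem isStack_map {Γ' : Type} {e : Γ → Γ'} {b : Γ} {w : List Γ}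
    (he : Function.Injective e) (h : IsStack b w) : IsStack (e b) (w.map e) := by
  obtain ⟨v, rfl, hv⟩ := h
  refine ⟨v.map e, by simp, ?_⟩
  rwa [List.mem_map_of_injective he]

theorem relConf_symm {Γ' : Type} (e : Γ ≃ Γ') (c : Q × (Fin n → List Γ)) :
    relConf e.symm (relConf e c) = c := by
  simp [relConf]

theorem relConf_symm' {Γ' : Type} (e : Γ ≃ Γ') (c : Q × (Fin n → List Γ')) :
    relConf e (relConf e.symm c) = c := by
  simp [relConf]

theorem mapSyms_symm {Γ' : Type} (M : MPA n Q A Γ) (e : Γ ≃ Γ') :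
    (M.mapSyms e).mapSyms e.symm = M := by
  simp [mapSyms]

theorem step_mapSyms {Γ' : Type} {M : MPA n Q A Γ} (e : Γ ≃ Γ') {c c' : Q × (Fin n → List Γ)}
    (h : M.StepAny c c') : (M.mapSyms e).StepAny (relConf e c) (relConf e c') := by
  obtain ⟨a, γ, α, w, hΔ, hw⟩ := h
  refine ⟨a, fun i => (γ i).map e, fun i => (α i).map e, fun i => (w i).map e, ?_, fun i => ?_⟩
  · simpa [mapSyms, relConf] using hΔ
  · obtain ⟨h1, h2, h3⟩ := hw i
    refine ⟨?_, ?_, isStack_map e.injective h3⟩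
    · cases hγ : γ i <;> simp [relConf, h1, hγ]
    · simp [relConf, h2]

theorem preStar_mapSyms {Γ' : Type} (M : MPA n Q A Γ) (e : Γ ≃ Γ') (U : Set (Q × (Fin n → List Γ')))
    (c : Q × (Fin n → List Γ)) :
    relConf e c ∈ preStar (M.mapSyms e).StepAny U ↔
      c ∈ preStar M.StepAny (relConf e ⁻¹' U) := by
  constructor
  · rintro ⟨d, hd, h⟩
    refine ⟨relConf e.symm d, by simpa [relConf_symm'] using hd, ?_⟩
    have := ReflTransGen.lift (relConf e.symm) (fun _ _ hs => step_mapSyms e.symm hs) _ _ h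
    rwa [Function.onFun, mapSyms_symm, relConf_symm] at this
  · rintro ⟨d, hd, h⟩
    exact ⟨relConf e d, hd, ReflTransGen.lift (relConf e) (fun _ _ hs => step_mapSyms e hs) _ _ h⟩

theorem wf_mapSyms {Γ' : Type} {M : MPA n Q A Γ} (e : Γ ≃ Γ') (h : M.WF) : (M.mapSyms e).WF := by
  refine ⟨fun h' => h.1 (e.injective h'), fun q γ a q' α hΔ i => ?_⟩
  obtain ⟨h1, h2, h3⟩ := h.2 _ _ _ _ _ hΔ i
  have hm : ∀ l : List Γ', e M.bot ∈ l ↔ M.bot ∈ l.map e.symm := fun l => by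
    simp [e.symm_apply_eq]
  refine ⟨by simpa using h1, fun hg => ?_, fun hg => ?_⟩
  · change e M.bot ∉ α i
    rw [hm]
    refine h2 fun h4 => hg ?_
    change γ i = some (e M.bot)
    cases hγ : γ i with
    | none => simp [hγ] at h4
    | some x => simp [hγ] at h4; simp [← h4]
  · change γ i = some (e M.bot) at hg
    obtain ⟨β, hβ, h5, h6⟩ := h3 (by simp [hg])
    refine ⟨β.map e, ?_, ?_, by simpa using h6⟩
    · have := congrArg (List.map e) hβ
      simpa [mapSyms] using this
    · change e M.bot ∉ β.map e
      rwa [List.mem_map_of_injective e.injective]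

theorem ordered_mapSyms {Γ' : Type} {M : MPA n Q A Γ} (e : Γ ≃ Γ') (h : M.Ordered) :
    (M.mapSyms e).Ordered := by
  intro q γ a q' α hΔ
  obtain ⟨i, h1, h2⟩ := h _ _ _ _ _ hΔ
  refine ⟨i, fun j hj => ?_, fun j hj => by simpa using h2 j hj⟩
  obtain ⟨x, hx, hx'⟩ := by simpa using h1 j hj
  simp [mapSyms, hx, ← hx']

/-- The transitions of an MPA, as a subtype of all tuples. -/
abbrev Tr (M : MPA n Q A Γ) : Type :=
  {t : Q × (Fin n → Option Γ) × Option A × Q × (Fin n → List Γ) //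
      M.Δ t.1 t.2.1 t.2.2.1 t.2.2.2.1 t.2.2.2.2}

theorem size_mapSyms {Γ' : Type} (M : MPA n Q A Γ) (e : Γ ≃ Γ') :
    (M.mapSyms e).size = M.size := by
  have h : Nat.card (M.mapSyms e).Tr = Nat.card M.Tr := by
    refine Nat.card_congr (Equiv.subtypeEquiv
      ((Equiv.refl Q).prodCongr (((Equiv.refl _).arrowCongr e.symm.optionCongr).prodCongr
        ((Equiv.refl _).prodCongr ((Equiv.refl _).prodCongr
          ((Equiv.refl _).arrowCongr (Equiv.listEquivOfEquiv e.symm)))))) ?_)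
    rintro ⟨q, γ, a, q', α⟩
    rfl
  simp only [size]
  rw [Nat.card_congr e.symm]
  exact congrArg _ h

theorem finite_tr [Finite Q] [Finite A] [Finite Γ] {M : MPA n Q A Γ} (h : M.WF) :
    Finite M.Tr := by
  have hL : {l : List Γ | l.length ≤ 2}.Finite := List.finite_length_le Γ 2
  have hα : {α : Fin n → List Γ | ∀ i, (α i).length ≤ 2}.Finite := by
    simpa [Set.pi] using Set.Finite.pi (fun _ : Fin n => hL)
  have := hα.to_subtype
  let f : M.Tr → Q × (Fin n → Option Γ) × Option A × Q ×
      {α : Fin n → List Γ | ∀ i, (α i).length ≤ 2} := fun t =>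
    (t.1.1, t.1.2.1, t.1.2.2.1, t.1.2.2.2.1, ⟨t.1.2.2.2.2, fun i => (h.2 _ _ _ _ _ t.2 i).1⟩)
  refine Finite.of_injective f ?_
  rintro ⟨⟨q, γ, a, q', α⟩, ht⟩ ⟨⟨r, δ, b, r', β⟩, ht'⟩ hf
  simpa [f] using hf

/-! ### The simulating automaton -/

/-- Pop `⊥` from the stacks before `i` and `x` from stack `i`. -/
def popAt (b : Γ) (i : Fin n) (x : Option Γ) : Fin n → Option Γ :=
  fun j => if j < i then some b else if j = i then x else none

/-- Push `⊥` on the stacks before `i` and `u` on stack `i`. -/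
def pushAt (b : Γ) (i : Fin n) (u : List Γ) : Fin n → List Γ :=
  fun j => if j < i then [b] else if j = i then u else []

/-- The transitions of the simulating automaton.  The state `inl (inl q)` is the state `q` of `M`;
in the state `inl (inr (p, i))` the automaton `T` is simulated, being in state `p` after having
read the first `i` stacks entirely; `inr ()` is `q_f`. -/
inductive SimΔ (M : MPA (n + 1) Q A Γ) (T : MAut Γ Q S) :
    (Q ⊕ ((Q ⊕ S) × Fin (n + 2))) ⊕ Unit → (Fin (n + 1) → Option Γ) → Option A →
      (Q ⊕ ((Q ⊕ S) × Fin (n + 2))) ⊕ Unit → (Fin (n + 1) → List Γ) → Prop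
  /-- A transition of `M`. -/
  | run {q γ a r α} : M.Δ q γ a r α → SimΔ M T (.inl (.inl q)) γ a (.inl (.inl r)) α
  /-- The simulation of `T` begins. -/
  | start (q) :
      SimΔ M T (.inl (.inl q)) (fun _ => none) none (.inl (.inr (.inl q, 0))) (fun _ => [])
  /-- An `ε`-transition of `T`. -/
  | eps {p p'} (i) : T.Δ p none p' →
      SimΔ M T (.inl (.inr (p, i))) (fun _ => none) none (.inl (.inr (p', i))) (fun _ => [])
  /-- `T` reads a symbol other than `⊥` from stack `i`. -/
  | read {p g p'} (i : Fin (n + 1)) : T.Δ p (some g) p' → g ≠ M.bot →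
      SimΔ M T (.inl (.inr (p, i.castSucc))) (popAt M.bot i (some g)) none
        (.inl (.inr (p', i.castSucc))) (pushAt M.bot i [])
  /-- `T` reads the `⊥` of stack `i`, which is restored. -/
  | cross {p p'} (i : Fin (n + 1)) : T.Δ p (some M.bot) p' →
      SimΔ M T (.inl (.inr (p, i.castSucc))) (popAt M.bot i (some M.bot)) none
        (.inl (.inr (p', i.succ))) (pushAt M.bot i [M.bot])
  /-- All stacks are read and `T` is in a final state. -/
  | accept {p} : p ∈ T.F →
      SimΔ M T (.inl (.inr (p, Fin.last _))) (fun _ => none) none (.inr ()) (fun _ => [])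

/-- The automaton that runs `M` and then simulates `T` on the current stack contents. -/
def sim (M : MPA (n + 1) Q A Γ) (T : MAut Γ Q S) :
    MPA (n + 1) ((Q ⊕ ((Q ⊕ S) × Fin (n + 2))) ⊕ Unit) A Γ where
  bot := M.bot
  Δ := SimΔ M T
  q0 := .inl (.inl M.q0)
  γ0 := M.γ0
  F := (fun q => .inl (.inl q)) '' M.F

theorem wf_sim {M : MPA (n + 1) Q A Γ} (T : MAut Γ Q S) (h : M.WF) : (sim M T).WF := by
  refine ⟨h.1, fun q γ a q' α hΔ j => ?_⟩
  change SimΔ M T q γ a q' α at hΔ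
  change _ ∧ (γ j ≠ some M.bot → M.bot ∉ α j) ∧
    (γ j = some M.bot → ∃ β, α j = β ++ [M.bot] ∧ M.bot ∉ β ∧ β.length ≤ 1)
  cases hΔ with
  | run hΔ => exact h.2 _ _ _ _ _ hΔ j
  | start | eps | accept => simp
  | read i hT hg =>
    rcases lt_trichotomy j i with hj | rfl | hj
    · simp [popAt, pushAt, hj]
    · simp [popAt, pushAt, hg]
    · simp [popAt, pushAt, hj.not_gt, hj.ne']
  | cross i hT =>
    rcases lt_trichotomy j i with hj | rfl | hj
    · simp [popAt, pushAt, hj]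
    · simp [popAt, pushAt]
    · simp [popAt, pushAt, hj.not_gt, hj.ne']

theorem ordered_sim {M : MPA (n + 1) Q A Γ} (T : MAut Γ Q S) (h : M.Ordered) :
    (sim M T).Ordered := by
  intro q γ a q' α hΔ
  change ∃ i, (∀ j, j < i → γ j = some M.bot) ∧ _
  cases hΔ with
  | run hΔ => exact h _ _ _ _ _ hΔ
  | start | eps | accept => exact ⟨0, by simp⟩
  | read i _ _ | cross i _ =>
    exact ⟨i, fun j hj => by simp [popAt, hj],
      fun j hj => by simp [popAt, hj.not_gt, hj.ne']⟩

/-- The transitions of an `M`-automaton, as a subtype of all tuples. -/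
abbrev AutTr (T : MAut Γ Q S) : Type :=
  {t : (Q ⊕ S) × Option Γ × (Q ⊕ S) // T.Δ t.1 t.2.1 t.2.2}

/-- Every transition of `sim M T` comes from a transition of `M`, a state of `M`, a transition of
`T` together with a stack index (in three ways), or a state of `T`. -/
theorem card_tr_sim_le [Finite Q] [Finite A] [Finite Γ] [Finite S] {M : MPA (n + 1) Q A Γ}
    (T : MAut Γ Q S) (h : M.WF) :
    Nat.card (sim M T).Tr ≤ Nat.card M.Tr + Nat.card Q + Nat.card (AutTr T) * (3 * n + 4) +
      Nat.card (Q ⊕ S) := by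
  have := finite_tr h
  let X := M.Tr ⊕ Q ⊕ (AutTr T × Fin (n + 2)) ⊕ (AutTr T × Fin (n + 1)) ⊕
    (AutTr T × Fin (n + 1)) ⊕ (Q ⊕ S)
  let St := (Q ⊕ ((Q ⊕ S) × Fin (n + 2))) ⊕ Unit
  let f : X → St × (Fin (n + 1) → Option Γ) × Option A × St × (Fin (n + 1) → List Γ) :=
    Sum.elim (fun t => (.inl (.inl t.1.1), t.1.2.1, t.1.2.2.1, .inl (.inl t.1.2.2.2.1),
      t.1.2.2.2.2)) <|
    Sum.elim (fun q => (.inl (.inl q), fun _ => none, none, .inl (.inr (.inl q, 0)),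
      fun _ => [])) <|
    Sum.elim (fun t => (.inl (.inr (t.1.1.1, t.2)), fun _ => none, none,
      .inl (.inr (t.1.1.2.2, t.2)), fun _ => [])) <|
    Sum.elim (fun t => (.inl (.inr (t.1.1.1, t.2.castSucc)), popAt M.bot t.2 t.1.1.2.1, none,
      .inl (.inr (t.1.1.2.2, t.2.castSucc)), pushAt M.bot t.2 [])) <|
    Sum.elim (fun t => (.inl (.inr (t.1.1.1, t.2.castSucc)), popAt M.bot t.2 t.1.1.2.1, none,
      .inl (.inr (t.1.1.2.2, t.2.succ)), pushAt M.bot t.2 [M.bot])) <|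
    (fun p => (.inl (.inr (p, Fin.last _)), fun _ => none, none, .inr (), fun _ => []))
  have hsub : {t : St × (Fin (n + 1) → Option Γ) × Option A × St × (Fin (n + 1) → List Γ) |
      SimΔ M T t.1 t.2.1 t.2.2.1 t.2.2.2.1 t.2.2.2.2} ⊆ Set.range f := by
    rintro ⟨q, γ, a, q', α⟩ hΔ
    change SimΔ M T q γ a q' α at hΔ
    cases hΔ with
    | run hΔ => exact ⟨.inl ⟨(_, _, _, _, _), hΔ⟩, rfl⟩
    | start q => exact ⟨.inr (.inl q), rfl⟩
    | eps i hT => exact ⟨.inr (.inr (.inl (⟨(_, _, _), hT⟩, i))), rfl⟩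
    | read i hT _ => exact ⟨.inr (.inr (.inr (.inl (⟨(_, _, _), hT⟩, i)))), rfl⟩
    | cross i hT => exact ⟨.inr (.inr (.inr (.inr (.inl (⟨(_, _, _), hT⟩, i))))), rfl⟩
    | @accept p _ => exact ⟨.inr (.inr (.inr (.inr (.inr p)))), rfl⟩
  calc Nat.card (sim M T).Tr ≤ Nat.card (Set.range f) :=
        Nat.card_mono (Set.finite_range f) hsub
    _ ≤ Nat.card X := Finite.card_range_le f
    _ = _ := by
        simp only [X, Nat.card_sum, Nat.card_prod, Nat.card_fin]
        ring

theorem size_sim_le [Finite Q] [Finite A] [Finite Γ] [Finite S] {M : MPA (n + 1) Q A Γ}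
    (T : MAut Γ Q S) (h : M.WF) : (sim M T).size ≤ 20 * (M.size * T.size) := by
  have hc := card_tr_sim_le T h
  have hq : 0 < Nat.card Q := Nat.card_pos_iff.2 ⟨⟨M.q0⟩, inferInstance⟩
  simp only [size, MAut.size, Nat.card_sum, Nat.card_prod, Nat.card_fin,
    Nat.card_unique] at hc ⊢
  change _ + Nat.card (sim M T).Tr ≤ 20 * ((_ + Nat.card M.Tr) * (_ + Nat.card (AutTr T)))
  generalize Nat.card (sim M T).Tr = d' at *
  generalize Nat.card M.Tr = d at *
  generalize Nat.card (AutTr T) = t at *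
  generalize Nat.card Q = q at *
  generalize Nat.card S = s at *
  generalize Nat.card A = a at *
  generalize Nat.card Γ = g at *
  obtain ⟨m, hm⟩ : ∃ m, m = n + 1 + q + a + g + d := ⟨_, rfl⟩
  obtain ⟨k, hk⟩ : ∃ k, k = q + s + g + t := ⟨_, rfl⟩
  rw [← hm, ← hk]
  have h1 : (q + s) * (n + 2) ≤ k * (2 * m) := Nat.mul_le_mul (by omega) (by omega)
  have h2 : t * (3 * n + 4) ≤ k * (4 * m) := Nat.mul_le_mul (by omega) (by omega)
  have h3 : m ≤ k * m := Nat.le_mul_of_pos_left _ (by omega)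
  have h4 : k ≤ k * m := Nat.le_mul_of_pos_right _ (by omega)
  have h5 : k * (2 * m) = 2 * (k * m) := by ring
  have h6 : k * (4 * m) = 4 * (k * m) := by ring
  have h7 : m * k = k * m := Nat.mul_comm _ _
  omega

/-! ### Correctness of the simulation -/

/-- The concatenation of the stacks from stack `i` onwards. -/
def restWord (w : Fin n → List Γ) (i : ℕ) : List Γ := ((List.ofFn w).drop i).flatten

theorem restWord_of_le (w : Fin n → List Γ) {i : ℕ} (h : n ≤ i) : restWord w i = [] := by
  simp [restWord, List.drop_eq_nil_of_le, h]

theorem restWord_eq (w : Fin n → List Γ) (i : Fin n) :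
    restWord w i = w i ++ restWord w (i + 1) := by
  rw [restWord, List.drop_eq_getElem_cons (by simp)]
  simp [restWord]

theorem restWord_congr {w w' : Fin n → List Γ} {i : ℕ} (h : ∀ j : Fin n, i ≤ j → w j = w' j) :
    restWord w i = restWord w' i := by
  have : (List.ofFn w).drop i = (List.ofFn w').drop i := by
    apply List.ext_getElem
    · simp
    · intro k h1 h2
      simp only [List.getElem_drop, List.getElem_ofFn]
      exact h _ (by simp)
  rw [restWord, this, restWord]

theorem IsStack.cons_bot {b : Γ} {u : List Γ} (h : IsStack b (b :: u)) : u = [] := by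
  obtain ⟨v, hv, hb⟩ := h
  cases v with
  | nil => simpa using hv
  | cons x v => simp_all

theorem IsStack.tail {b x : Γ} {u : List Γ} (h : IsStack b (x :: u)) (hx : x ≠ b) :
    IsStack b u := by
  obtain ⟨v, hv, hb⟩ := h
  cases v with
  | nil => simp_all
  | cons y v => exact ⟨v, by simp_all, by simp_all⟩

theorem IsStack.exists_cons {b : Γ} {w : List Γ} (h : IsStack b w) : ∃ x u, w = x :: u := by
  obtain ⟨v, rfl, -⟩ := h
  cases v <;> simp

theorem step_nop {M : MPA n Q A Γ} {q q' : Q} {w : Fin n → List Γ}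
    (hw : ∀ i, IsStack M.bot (w i)) (h : M.Δ q (fun _ => none) none q' (fun _ => [])) :
    M.StepAny (q, w) (q', w) :=
  ⟨none, _, _, w, h, fun i => ⟨rfl, rfl, hw i⟩⟩

/-- Popping `x` from stack `i` and pushing `u`, the stacks before `i` being empty. -/
theorem step_at {M : MPA n Q A Γ} {q q' : Q} {w w' : Fin n → List Γ} {i : Fin n} {x : Γ}
    {u v : List Γ} (hw : ∀ i, IsStack M.bot (w i)) (hlt : ∀ j < i, w j = [M.bot])
    (hi : w i = x :: v) (hw' : w' = Function.update w i (u ++ v))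
    (h : M.Δ q (popAt M.bot i (some x)) none q' (pushAt M.bot i u)) :
    M.StepAny (q, w) (q', w') := by
  subst hw'
  refine ⟨none, _, _, fun j => if j < i then [] else if j = i then v else w j, h,
    fun j => ⟨?_, ?_, hw j⟩⟩
  · rcases lt_trichotomy j i with hj | rfl | hj
    · simp [popAt, hj, hlt j hj]
    · simp [popAt, hi]
    · simp [popAt, hj.not_gt, hj.ne']
  · rcases lt_trichotomy j i with hj | rfl | hj
    · simp [pushAt, hj, hlt j hj, hj.ne]
    · simp [pushAt]
    · simp [pushAt, hj.not_gt, hj.ne']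

/-- An accepting run of `T` on the stacks from `i` onwards is simulated by a run to `q_f`. -/
theorem reach_of_evalRel (M : MPA (n + 1) Q A Γ) (T : MAut Γ Q S) {p f : Q ⊕ S} {x : List Γ}
    (h : EvalRel T.Δ p x f) (hf : f ∈ T.F) :
    ∀ (i : Fin (n + 2)) (w : Fin (n + 1) → List Γ), (∀ j, IsStack M.bot (w j)) →
      (∀ j : Fin (n + 1), (j : ℕ) < i → w j = [M.bot]) → x = restWord w i →
      ReflTransGen (sim M T).StepAny (.inl (.inr (p, i)), w) (.inr (), fun _ => [M.bot]) := by
  induction h with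
  | refl p =>
    intro i w hw hlt hx
    induction i using Fin.lastCases with
    | cast i =>
      obtain ⟨y, u, hu⟩ := (hw i).exists_cons
      rw [Fin.val_castSucc, restWord_eq, hu] at hx
      simp at hx
    | last =>
      have : w = fun _ => [M.bot] := funext fun j => hlt j (by simp; omega)
      subst this
      exact .single (step_nop hw (SimΔ.accept hf))
  | @step p a p' x f hT _ ih =>
    intro i w hw hlt hx
    cases a with
    | none => exact .head (step_nop hw (SimΔ.eps i hT)) (ih hf i w hw hlt (by simpa using hx))
    | some g =>
      induction i using Fin.lastCases with
      | last => rw [restWord_of_le _ (by simp)] at hx; simp at hx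
      | cast i =>
        obtain ⟨y, u, hu⟩ := (hw i).exists_cons
        rw [Fin.val_castSucc, restWord_eq, hu] at hx
        simp only [Option.toList_some, List.cons_append, List.nil_append, List.cons.injEq] at hx
        obtain ⟨rfl, hx⟩ := hx
        have hlt' : ∀ j < i, w j = [M.bot] := fun j hj => hlt j (by simpa using hj)
        have hs := hw i
        rw [hu] at hs
        by_cases hg : g = M.bot
        · subst hg
          obtain rfl := hs.cons_bot
          refine .head (step_at hw hlt' hu (by simp [← hu]) (SimΔ.cross i hT))
            (ih hf i.succ w hw (fun j hj => ?_) (by simpa using hx))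
          rcases (show j ≤ i by simp at hj; omega).lt_or_eq with hj | rfl
          · exact hlt' j hj
          · exact hu
        · refine .head (step_at hw hlt' hu rfl (SimΔ.read i hT hg))
            (ih hf i.castSucc _ (fun j => ?_) (fun j hj => ?_) ?_)
          · rcases eq_or_ne j i with rfl | hj
            · simpa using hs.tail hg
            · simpa [hj] using hw j
          · have hj : j < i := by simpa using hj
            simpa [hj.ne] using hlt' j hj
          · rw [Fin.val_castSucc, restWord_eq, hx]
            simp only [Function.update_self, List.nil_append]
            congr 1
            refine restWord_congr fun j hj => ?_
            rw [Function.update_of_ne]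
            rintro rfl
            omega

/-- What the existence of a run of `sim M T` from a given configuration to `q_f` amounts to. -/
def Sound (M : MPA (n + 1) Q A Γ) (T : MAut Γ Q S) :
    ((Q ⊕ ((Q ⊕ S) × Fin (n + 2))) ⊕ Unit) × (Fin (n + 1) → List Γ) → Prop
  | (.inl (.inl q), w) => (q, w) ∈ preStar M.StepAny {d | MAut.AcceptConf M T d}
  | (.inl (.inr (p, i)), w) => ∃ f ∈ T.F, EvalRel T.Δ p (restWord w i) f
  | (.inr _, _) => True

theorem sim_sound (M : MPA (n + 1) Q A Γ) (T : MAut Γ Q S)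
    {c : ((Q ⊕ ((Q ⊕ S) × Fin (n + 2))) ⊕ Unit) × (Fin (n + 1) → List Γ)}
    {v : Fin (n + 1) → List Γ} (h : ReflTransGen (sim M T).StepAny c (.inr (), v)) :
    Sound M T c := by
  induction h using ReflTransGen.head_induction_on with
  | refl => trivial
  | @head c c' hstep _ ih =>
    obtain ⟨s, w⟩ := c
    obtain ⟨s', w'⟩ := c'
    obtain ⟨a, γ, α, z, hΔ, hz⟩ := hstep
    change SimΔ M T s γ a s' α at hΔ
    have hst : ∀ i, IsStack M.bot (w i) := fun i => (hz i).2.2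
    have h1 : ∀ i, w i = (γ i).toList ++ z i := fun i => (hz i).1
    have h2 : ∀ i, w' i = α i ++ z i := fun i => (hz i).2.1
    clear hz
    cases hΔ with
    | run hΔ =>
      obtain ⟨d, hd, hr⟩ := ih
      exact ⟨d, hd, .head ⟨a, γ, α, z, hΔ, fun i => ⟨h1 i, h2 i, hst i⟩⟩ hr⟩
    | start q =>
      obtain rfl : w = w' := funext fun i => by rw [h1, h2]; rfl
      exact ⟨(q, w), ⟨hst, by simpa [Sound, restWord] using ih⟩, .refl⟩
    | eps i hT =>
      obtain rfl : w = w' := funext fun i => by rw [h1, h2]; rfl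
      obtain ⟨f, hf, hr⟩ := ih
      exact ⟨f, hf, .step hT hr⟩
    | @read p g p' i hT hg =>
      obtain ⟨f, hf, hr⟩ := ih
      refine ⟨f, hf, ?_⟩
      have e : restWord w (i.castSucc : Fin (n + 2)) =
          (some g).toList ++ restWord w' (i.castSucc : Fin (n + 2)) := by
        rw [Fin.val_castSucc, restWord_eq, restWord_eq, h1, h2, restWord_congr (w' := w')]
        · simp [popAt, pushAt]
        · intro j hj
          have hj : i < j := Fin.lt_def.2 hj
          simp [h1, h2, popAt, pushAt, hj.not_gt, hj.ne']
      rw [e]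
      exact .step hT hr
    | @cross p p' i hT =>
      obtain ⟨f, hf, hr⟩ := ih
      refine ⟨f, hf, ?_⟩
      have hi : w i = M.bot :: z i := by simp [h1 i, popAt]
      have hzi : z i = [] := (hi ▸ hst i).cons_bot
      have e : restWord w (i.castSucc : Fin (n + 2)) =
          (some M.bot).toList ++ restWord w' (i.succ : Fin (n + 2)) := by
        rw [Fin.val_castSucc, restWord_eq, hi, hzi, Fin.val_succ, restWord_congr (w' := w')]
        · simp
        · intro j hj
          have hj : i < j := Fin.lt_def.2 hj
          simp [h1, h2, popAt, pushAt, hj.not_gt, hj.ne']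
      rw [e]
      exact .step hT hr
    | accept hp => exact ⟨_, hp, by rw [restWord_of_le _ (by simp)]; exact .refl _⟩

theorem preStar_sim (M : MPA (n + 1) Q A Γ) (T : MAut Γ Q S) (c : Q × (Fin (n + 1) → List Γ)) :
    c ∈ preStar M.StepAny {d | MAut.AcceptConf M T d} ↔
      (.inl (.inl c.1), c.2) ∈ preStar (sim M T).StepAny
        {d | d.1 = .inr () ∧ d.2 = fun _ => [M.bot]} := by
  constructor
  · rintro ⟨d, ⟨hst, f, hf, hr⟩, h⟩
    have hstart : (sim M T).StepAny (.inl (.inl d.1), d.2) (.inl (.inr (.inl d.1, 0)), d.2) :=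
      step_nop hst (SimΔ.start d.1)
    refine ⟨(.inr (), fun _ => [M.bot]), ⟨rfl, rfl⟩, ReflTransGen.trans
      (b := (.inl (.inl d.1), d.2)) ?_ (.head hstart
        (reach_of_evalRel M T hr hf 0 d.2 hst (by simp) (by simp [restWord])))⟩
    refine ReflTransGen.lift (fun c : Q × (Fin (n + 1) → List Γ) =>
      ((.inl (.inl c.1), c.2) : ((Q ⊕ ((Q ⊕ S) × Fin (n + 2))) ⊕ Unit) × _)) ?_ _ _ h
    rintro c c' ⟨a, γ, α, w, hΔ, hw⟩
    exact ⟨a, γ, α, w, SimΔ.run hΔ, hw⟩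
  · rintro ⟨⟨s, v⟩, ⟨hs, -⟩, h⟩
    obtain rfl : s = .inr () := hs
    exact sim_sound M T h

end MPA

/-- For an ordered MPA `M` and an `M`-automaton `A` one can construct an
ordered MPA `M'` with state set `Q' ∪ {q_f}` (with `Q ⊆ Q'`, `q_f ∉ Q'`), extended stack
alphabet `Γ'`, unchanged initial data and final states, and `|M'| = O(|M| · |A|)`, such that
`c ∈ Pre*_{T(M)}(L_M(A))` iff `c ∈ Pre*_{T(M')}({(q_f,⊥,…,⊥)})`. -/
theorem ompa_preStar_reduce_to_empty_target :
    ∃ cst : ℕ, 0 < cst ∧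
      ∀ (n : ℕ) (Q A Γ S : Type) (_ : Finite Q) (_ : Finite A) (_ : Finite Γ)
        (_ : Finite S) (M : MPA (n+1) Q A Γ) (T : MAut Γ Q S),
        M.WF → M.Ordered →
        ∃ (E G : Type) (_ : Finite E) (_ : Finite G)
          (M' : MPA (n+1) ((Q ⊕ E) ⊕ Unit) A (Γ ⊕ G)),
          M'.WF ∧ M'.Ordered ∧
          M'.bot = Sum.inl M.bot ∧ M'.q0 = Sum.inl (Sum.inl M.q0) ∧
          M'.γ0 = Sum.inl M.γ0 ∧ M'.F = (fun q => Sum.inl (Sum.inl q)) '' M.F ∧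
          M'.size ≤ cst * (M.size * T.size) ∧
          ∀ c : Q × (Fin (n+1) → List Γ),
            (c ∈ preStar M.StepAny {d | MAut.AcceptConf M T d} ↔
              (Sum.inl (Sum.inl c.1), fun i => (c.2 i).map Sum.inl) ∈
                preStar M'.StepAny
                  {d | d.1 = Sum.inr () ∧ d.2 = fun _ => [Sum.inl M.bot]}) := by
  refine ⟨20, by norm_num, fun n Q A Γ S _ _ _ _ M T hWF hO => ?_⟩
  let e : Γ ≃ Γ ⊕ Empty := (Equiv.sumEmpty Γ Empty).symm
  refine ⟨(Q ⊕ S) × Fin (n + 2), Empty, inferInstance, inferInstance,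
    (MPA.sim M T).mapSyms e, MPA.wf_mapSyms e (MPA.wf_sim T hWF),
    MPA.ordered_mapSyms e (MPA.ordered_sim T hO), rfl, rfl, rfl, rfl, ?_, fun c => ?_⟩
  · rw [MPA.size_mapSyms]
    exact MPA.size_sim_le T hWF
  · rw [MPA.preStar_sim]
    have hinj : Function.Injective
        (fun (w : Fin (n + 1) → List Γ) i => (w i).map e) := fun w w' h =>
      funext fun i => List.map_injective_iff.2 e.injective (congrFun h i)
    refine Iff.trans ?_ (MPA.preStar_mapSyms (MPA.sim M T) e
      {d | d.1 = Sum.inr () ∧ d.2 = fun _ => [Sum.inl M.bot]} (.inl (.inl c.1), c.2)).symm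
    refine iff_of_eq (congrArg (fun U => _ ∈ preStar _ U) ?_)
    ext d
    exact and_congr_right fun _ => (hinj.eq_iff (b := fun _ => [M.bot])).symm
end

section
/- There exists a constant d such that for every ordered multi-pushdown automaton M = (n,Q,Σ,Γ,Δ,q₀,γ₀,F) in normal form and every state q ∈ Q, there exists an M-automaton A with |A| ≤ |M|^{2^{d·n}} such that L_M(A) = Pre*_{T(M)}({(q,⊥,…,⊥)}). -/
/-! ### Ordered stack systems -/

namespace OrderedStacks

/-- A system of ordered rewriting rules with control states `P`.  The rule `R p i κ p' α` is
enabled when stacks `0, …, i-1` are empty; it pops `κ` (possibly nothing) from stack `i` and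
pushes `α j` on every stack `j`.  Rules are indexed by `ℕ` so that the same rule makes sense for
any number `k` of stacks; stack contents carry no bottom symbol here. -/
abbrev Sys (P Γ : Type) := P → ℕ → Option Γ → P → (ℕ → List Γ) → Prop

/-- The effect of a rule with level `i`, popped symbol `κ` and pushed words `α` on stack `j`. -/
def Act {Γ : Type} (i : ℕ) (κ : Option Γ) (α : ℕ → List Γ) (j : ℕ) (u u' : List Γ) : Prop :=
  (j < i → u = []) ∧ ∃ v, u = (if j = i then κ.toList else []) ++ v ∧ u' = α j ++ v

/-- One step of the system `R` on `k` stacks. -/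
def Step {P Γ : Type} (k : ℕ) (R : Sys P Γ) (c c' : P × (Fin k → List Γ)) : Prop :=
  ∃ i κ α, R c.1 i κ c'.1 α ∧ ∀ j : Fin k, Act i κ α j (c.2 j) (c'.2 j)

/-- Reachability in the system `R` on `k` stacks. -/
abbrev Reach {P Γ : Type} (k : ℕ) (R : Sys P Γ) (c c' : P × (Fin k → List Γ)) : Prop :=
  Relation.ReflTransGen (Step k R) c c'

/-- The stack contents `x` extended by a last stack `u`. -/
def ext {Γ : Type} {k : ℕ} (x : Fin k → List Γ) (u : List Γ) : Fin (k+1) → List Γ :=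
  Fin.snoc (α := fun _ => List Γ) x u

/-- All stacks are empty. -/
def emp {Γ : Type} {k : ℕ} : Fin k → List Γ := fun _ => []

section
variable {P Γ : Type} {k : ℕ} {R : Sys P Γ}

@[simp] lemma ext_castSucc (x : Fin k → List Γ) (u : List Γ) (j : Fin k) :
    ext x u j.castSucc = x j := by simp [ext]

@[simp] lemma ext_last (x : Fin k → List Γ) (u : List Γ) : ext x u (Fin.last k) = u := by
  simp [ext]

lemma exists_ext (w : Fin (k+1) → List Γ) : ∃ x u, w = ext x u :=
  ⟨Fin.init w, w (Fin.last k), by simp [ext]⟩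

lemma ext_emp_nil : ext (emp : Fin k → List Γ) [] = emp := by
  funext j
  refine Fin.lastCases ?_ (fun j => ?_) j <;> simp [emp]

lemma ext_eq_emp {x : Fin k → List Γ} {u : List Γ} (h : ext x u = emp) : x = emp ∧ u = [] := by
  refine ⟨funext fun j => ?_, ?_⟩
  · simpa [emp] using congrFun h j.castSucc
  · simpa [emp] using congrFun h (Fin.last k)

lemma step_ext {p p' : P} {x x' : Fin k → List Γ} {u u' : List Γ} :
    Step (k+1) R (p, ext x u) (p', ext x' u') ↔
      ∃ i κ α, R p i κ p' α ∧ (∀ j : Fin k, Act i κ α j (x j) (x' j)) ∧ Act i κ α k u u' := by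
  simp [Step, Fin.forall_fin_succ']

/-- If no rule tests the last stack for emptiness, extra symbols may be put below it. -/
lemma reach_frame (hR : ∀ p i κ p' α, R p i κ p' α → i ≤ k) (t : List Γ) {p p' : P}
    {x x' : Fin k → List Γ} {u u' : List Γ} (h : Reach (k+1) R (p, ext x u) (p', ext x' u')) :
    Reach (k+1) R (p, ext x (u ++ t)) (p', ext x' (u' ++ t)) := by
  have key := Relation.ReflTransGen.lift (p := Step (k+1) R)
    (fun c : P × (Fin (k+1) → List Γ) =>
      (c.1, ext (fun j => c.2 j.castSucc) (c.2 (Fin.last k) ++ t))) ?_ _ _ h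
  · simpa [Function.onFun] using key
  · rintro ⟨q, w⟩ ⟨q', w'⟩ hs
    obtain ⟨y, v, rfl⟩ := exists_ext w
    obtain ⟨y', v', rfl⟩ := exists_ext w'
    obtain ⟨i, κ, α, h1, h2, h3, v0, h4, h5⟩ := step_ext.1 hs
    have := hR _ _ _ _ _ h1
    simp only [Function.onFun, ext_castSucc, ext_last]
    exact step_ext.2 ⟨i, κ, α, h1, h2, fun hk => by omega, v0 ++ t, by simp [h4], by simp [h5]⟩

/-- A run emptying all stacks can be cut at a moment at which `u` has been consumed from the top
of the last stack and the other stacks are empty: the last stack is popped only when all the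
others are empty. -/
lemma reach_split (hR : ∀ p i κ p' α, R p i κ p' α → i ≤ k) {p q : P} {x : Fin k → List Γ}
    {u v : List Γ} (h : Reach (k+1) R (p, ext x (u ++ v)) (q, emp)) :
    ∃ p', Reach (k+1) R (p, ext x u) (p', emp) ∧ Reach (k+1) R (p', ext emp v) (q, emp) := by
  generalize hc : (p, ext x (u ++ v)) = c at h
  induction h using Relation.ReflTransGen.head_induction_on generalizing p x u with
  | refl =>
    simp only [Prod.mk.injEq] at hc
    obtain ⟨rfl, hc⟩ := hc
    obtain ⟨rfl, huv⟩ := ext_eq_emp hc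
    obtain ⟨rfl, rfl⟩ := List.append_eq_nil_iff.1 huv
    exact ⟨p, by rw [ext_emp_nil], by rw [ext_emp_nil]⟩
  | @head c d hs hr ih =>
    subst hc
    obtain ⟨p1, w1⟩ := d
    obtain ⟨x1, u1, rfl⟩ := exists_ext w1
    obtain ⟨i, κ, α, h1, h2, h3, v0, h4, h5⟩ := step_ext.1 hs
    have hik := hR _ _ _ _ _ h1
    -- The cut is here if `u` is used up and the others are empty; otherwise the step acts above `v`.
    by_cases hcut : i = k ∧ u = []
    · obtain ⟨rfl, rfl⟩ := hcut
      have hx : x = emp := funext fun j => (h2 j).1 j.2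
      subst hx
      exact ⟨p, by rw [ext_emp_nil], Relation.ReflTransGen.head hs hr⟩
    · obtain ⟨u0, hu0, hv0⟩ : ∃ u0, u = (if k = i then κ.toList else []) ++ u0 ∧
          v0 = u0 ++ v := by
        by_cases hki : k = i
        · have hu : u ≠ [] := fun hu => hcut ⟨hki.symm, hu⟩
          rcases κ with _ | g
          · exact ⟨u, by simp, by simpa using h4.symm⟩
          · obtain ⟨a, u0, rfl⟩ := List.exists_cons_of_ne_nil hu
            simp only [hki, if_true, Option.toList_some, List.cons_append, List.nil_append,
              List.cons.injEq] at h4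
            exact ⟨u0, by simp [hki, h4.1], h4.2.symm⟩
        · exact ⟨u, by simp [hki], by simpa [hki] using h4.symm⟩
      subst hv0
      rw [← List.append_assoc] at h5
      subst h5
      obtain ⟨p', r1, r2⟩ := ih rfl
      refine ⟨p', Relation.ReflTransGen.head (step_ext.2 ?_) r1, r2⟩
      exact ⟨i, κ, α, h1, h2, fun hk => by omega, u0, hu0, rfl⟩

/-- `Pop R k p u q`: starting with `u` as the only nonempty stack, namely the last one of `k+1`,
all stacks can be emptied while moving from `p` to `q`. -/
def Pop (R : Sys P Γ) (k : ℕ) (p : P) (u : List Γ) (q : P) : Prop :=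
  Reach (k+1) R (p, ext emp u) (q, emp)

lemma pop_append (hR : ∀ p i κ p' α, R p i κ p' α → i ≤ k) {p q : P} {u v : List Γ} :
    Pop R k p (u ++ v) q ↔ ∃ p', Pop R k p u p' ∧ Pop R k p' v q := by
  refine ⟨reach_split hR, ?_⟩
  rintro ⟨p', h1, h2⟩
  rw [Pop, ← ext_emp_nil] at h1
  exact (reach_frame hR v h1).trans h2

/-- Elimination of the last stack.  A state `(p, s)` consists of a state `p` of `R` together
with the state `s` in which the current content of the last stack will start to be popped.
Pushing `α k` on the last stack changes the prediction from `s` to some `s'` from which `α k`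
can be popped so as to arrive in `s`.  Rules popping from the last stack disappear. -/
def reduce (R : Sys P Γ) (k : ℕ) : Sys (P × P) Γ := fun c i κ c' α =>
  R c.1 i κ c'.1 α ∧ i < k ∧ Pop R k c'.2 (α k) c.2

/-- Emptying `k+1` stacks amounts to emptying the first `k` stacks in the reduced system,
ending in a state whose prediction is correct, and then popping the last stack. -/
lemma reach_reduce (hR : ∀ p i κ p' α, R p i κ p' α → i ≤ k) {p q : P} {x : Fin k → List Γ}
    {u : List Γ} :
    Reach (k+1) R (p, ext x u) (q, emp) ↔
      ∃ s p', Reach k (reduce R k) ((p, s), x) ((p', p'), emp) ∧ Pop R k s u q := by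
  constructor
  · intro h
    generalize hc : (p, ext x u) = c at h
    induction h using Relation.ReflTransGen.head_induction_on generalizing p x u with
    | refl =>
      simp only [Prod.mk.injEq] at hc
      obtain ⟨rfl, hc⟩ := hc
      obtain ⟨rfl, rfl⟩ := ext_eq_emp hc
      exact ⟨p, p, .refl, by rw [Pop, ext_emp_nil]⟩
    | @head c d hs hr ih =>
      subst hc
      obtain ⟨p1, w1⟩ := d
      obtain ⟨x1, u1, rfl⟩ := exists_ext w1
      obtain ⟨i, κ, α, h1, h2, h3, v0, h4, h5⟩ := step_ext.1 hs
      rcases (hR _ _ _ _ _ h1).lt_or_eq with hik | rfl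
      · have hne : k ≠ i := by omega
        simp only [hne, if_false, List.nil_append] at h4
        subst h4 h5
        obtain ⟨s1, p', r1, r2⟩ := ih rfl
        obtain ⟨s, hs1, hs2⟩ := (pop_append hR).1 r2
        exact ⟨s, p', .head ⟨i, κ, α, ⟨h1, hik, hs1⟩, h2⟩ r1, hs2⟩
      -- A rule of level `k` starts the popping of the last stack: the prediction is `p` itself.
      · have hx : x = emp := funext fun j => (h2 j).1 j.2
        subst hx
        exact ⟨p, p, .refl, Relation.ReflTransGen.head hs hr⟩
  · rintro ⟨s, p', h, hp⟩
    generalize hc : (((p, s), x) : (P × P) × (Fin k → List Γ)) = c at h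
    induction h using Relation.ReflTransGen.head_induction_on generalizing p s x u with
    | refl =>
      simp only [Prod.mk.injEq] at hc
      obtain ⟨⟨rfl, rfl⟩, rfl⟩ := hc
      exact hp
    | @head c d hs hr ih =>
      subst hc
      obtain ⟨⟨p1, s1⟩, x1⟩ := d
      obtain ⟨i, κ, α, ⟨h1, hik, h3⟩, h2⟩ := hs
      have hr := ih (u := α k ++ u) s1 ((pop_append hR).2 ⟨s, h3, hp⟩) rfl
      refine Relation.ReflTransGen.head (step_ext.2 ⟨i, κ, α, h1, h2, ?_⟩) hr
      exact ⟨fun _ => by omega, u, by simp [show k ≠ i by omega], rfl⟩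

/-- Rules of level at least `k` can fire only when all `k` stacks are empty; they can be
dropped if `F` is replaced by the set of states from which `F` is reachable starting with empty
stacks. -/
lemma reach_restrict {F : Set P} {p : P} {w : Fin k → List Γ} :
    (∃ q ∈ F, Reach k R (p, w) (q, emp)) ↔
      ∃ q', (∃ q ∈ F, Reach k R (q', emp) (q, emp)) ∧
        Reach k (fun p i κ p' α => R p i κ p' α ∧ i < k) (p, w) (q', emp) := by
  constructor
  · rintro ⟨q, hq, h⟩
    generalize hc : (p, w) = c at h
    induction h using Relation.ReflTransGen.head_induction_on generalizing p w with
    | refl =>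
      simp only [Prod.mk.injEq] at hc
      obtain ⟨rfl, rfl⟩ := hc
      exact ⟨p, ⟨p, hq, .refl⟩, .refl⟩
    | @head c d hs hr ih =>
      subst hc
      obtain ⟨p1, w1⟩ := d
      by_cases hk : ∃ i κ α, k ≤ i ∧ R p i κ p1 α ∧ ∀ j : Fin k, Act i κ α j (w j) (w1 j)
      · obtain ⟨i, κ, α, hki, h1, h2⟩ := hk
        have hw : w = emp := funext fun j => (h2 j).1 (by omega)
        subst hw
        exact ⟨p, ⟨q, hq, .head hs hr⟩, .refl⟩
      · obtain ⟨i, κ, α, h1, h2⟩ := hs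
        obtain ⟨q', h3, h4⟩ := ih rfl
        refine ⟨q', h3, .head ⟨i, κ, α, ⟨h1, ?_⟩, h2⟩ h4⟩
        by_contra hlt
        exact hk ⟨i, κ, α, by omega, h1, h2⟩
  · rintro ⟨q', ⟨q, hq, h⟩, h'⟩
    refine ⟨q, hq, Relation.ReflTransGen.trans (Relation.ReflTransGen.mono ?_ _ _ h') h⟩
    rintro c d ⟨i, κ, α, ⟨h1, _⟩, h2⟩
    exact ⟨i, κ, α, h1, h2⟩

end

/-! ### The automaton -/

/-- The word `w₁⊥w₂⊥⋯wₖ⊥` encoding stack contents. -/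
def enc {Γ : Type} (bot : Γ) {k : ℕ} (w : Fin k → List Γ) : List Γ :=
  (List.ofFn fun j => w j ++ [bot]).flatten

lemma enc_ext {Γ : Type} (bot : Γ) {k : ℕ} (x : Fin k → List Γ) (u : List Γ) :
    enc bot (ext x u) = enc bot x ++ (u ++ [bot]) := by
  rw [enc, List.ofFn_succ']
  simp [enc, List.concat_eq_append]

lemma append_bot_inj {Γ : Type} {bot : Γ} {u u' t t' : List Γ} (hu : bot ∉ u) (hu' : bot ∉ u')
    (h : u ++ bot :: t = u' ++ bot :: t') : u = u' ∧ t = t' := by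
  induction u generalizing u' with
  | nil =>
    cases u' with
    | nil => simpa using h
    | cons a u' => exact absurd (List.cons.inj h).1 fun e => hu' (e ▸ List.mem_cons_self)
  | cons b u ih =>
    cases u' with
    | nil => exact absurd (List.cons.inj h).1 fun e => hu (e ▸ List.mem_cons_self)
    | cons a u' =>
      simp only [List.cons_append, List.cons.injEq, List.mem_cons, not_or] at h hu hu'
      obtain ⟨h1, h2⟩ := ih hu.2 hu'.2 h.2
      exact ⟨by rw [h.1, h1], h2⟩

/-- Contents without `⊥` can be read off from their encoding. -/
lemma enc_inj {Γ : Type} {bot : Γ} {k : ℕ} {w w' : Fin k → List Γ} (hw : ∀ j, bot ∉ w j)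
    (hw' : ∀ j, bot ∉ w' j) (h : enc bot w = enc bot w') : w = w' := by
  induction k with
  | zero => exact Subsingleton.elim _ _
  | succ k ih =>
    simp only [enc, List.ofFn_succ, List.flatten_cons, List.append_assoc, List.cons_append,
      List.nil_append] at h
    obtain ⟨h0, h1⟩ := append_bot_inj (hw 0) (hw' 0) h
    have := ih (w := fun j => w j.succ) (w' := fun j => w' j.succ) (fun j => hw _)
      (fun j => hw' _) h1
    funext j
    exact Fin.cases h0 (fun j => congrFun this j) j

lemma evalRel_trans {Q A : Type} {Δ : Q → Option A → Q → Prop} {p q r : Q} {u v : List A}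
    (h : EvalRel Δ p u q) (h' : EvalRel Δ q v r) : EvalRel Δ p (u ++ v) r := by
  induction h with
  | refl => exact h'
  | step hs _ ih => rw [List.append_assoc]; exact .step hs (ih h')

/-- States of the automaton reading one more stack: the entry points `ini p`, the states
`mid t s` simulating state `t` of the automaton for the first stacks under the prediction `s`,
the states `fin s` reading the last stack, and the accepting state `acc`. -/
inductive St (P S : Type)
  | ini (p : P)
  | mid (t : S) (s : P)
  | fin (s : P)
  | acc

/-- Transitions of the automaton reading one more stack. -/
inductive Tr {P S Γ : Type} (bot : Γ) (Δ' : S → Option Γ → S → Prop) (start' : P × P → S)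
    (F' : Set S) (pop : P → List Γ → P → Prop) (F : Set P) :
    St P S → Option Γ → St P S → Prop
  | guess (p s : P) : Tr bot Δ' start' F' pop F (.ini p) none (.mid (start' (p, s)) s)
  | sim (t t' : S) (a : Option Γ) (s : P) (h : Δ' t a t') :
      Tr bot Δ' start' F' pop F (.mid t s) a (.mid t' s)
  | switch (t : S) (s : P) (h : t ∈ F') : Tr bot Δ' start' F' pop F (.mid t s) none (.fin s)
  | read (s s' : P) (a : Option Γ) (h : pop s a.toList s') (ha : a ≠ some bot) :
      Tr bot Δ' start' F' pop F (.fin s) a (.fin s')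
  | close (s : P) (h : s ∈ F) : Tr bot Δ' start' F' pop F (.fin s) (some bot) .acc

/-- The words accepted from the state `fin s`: a `⊥`-free word popped from `s` into `F`, then `⊥`. -/
def FinLang {P Γ : Type} (bot : Γ) (pop : P → List Γ → P → Prop) (F : Set P) (s : P)
    (z : List Γ) : Prop :=
  ∃ u, z = u ++ [bot] ∧ bot ∉ u ∧ ∃ q ∈ F, pop s u q

/-- The words leading from each state of the automaton to `acc`. -/
def StLang {P S Γ : Type} (bot : Γ) (Δ' : S → Option Γ → S → Prop) (start' : P × P → S)
    (F' : Set S) (pop : P → List Γ → P → Prop) (F : Set P) : St P S → List Γ → Prop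
  | .ini p, z => ∃ s y z', z = y ++ z' ∧ (∃ f ∈ F', EvalRel Δ' (start' (p, s)) y f) ∧
      FinLang bot pop F s z'
  | .mid t s, z => ∃ y z', z = y ++ z' ∧ (∃ f ∈ F', EvalRel Δ' t y f) ∧ FinLang bot pop F s z'
  | .fin s, z => FinLang bot pop F s z
  | .acc, z => z = []

section
variable {P S Γ : Type} {bot : Γ} {Δ' : S → Option Γ → S → Prop} {start' : P × P → S}
  {F' : Set S} {pop : P → List Γ → P → Prop} {F : Set P}

/-- Soundness of the description `StLang`, by induction on the run. -/
lemma stLang_of_evalRel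
    (hpop : ∀ p u v q, pop p (u ++ v) q ↔ ∃ p', pop p u p' ∧ pop p' v q)
    (hnil : ∀ p, pop p [] p) {x : St P S} {z : List Γ}
    (h : EvalRel (Tr bot Δ' start' F' pop F) x z .acc) :
    StLang bot Δ' start' F' pop F x z := by
  generalize hy : (St.acc : St P S) = y at h
  induction h with
  | refl => subst hy; rfl
  | step hs _ ih =>
    have ih := ih hy
    cases hs with
    | guess p s =>
      obtain ⟨y, z', h⟩ := ih
      exact ⟨s, y, z', h⟩
    | sim t t' a s h =>
      obtain ⟨y, z', rfl, ⟨f, hf, hy⟩, h2⟩ := ih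
      exact ⟨_ ++ y, z', (List.append_assoc _ _ _).symm, ⟨f, hf, .step h hy⟩, h2⟩
    | switch t s h => exact ⟨[], _, rfl, ⟨t, h, .refl t⟩, ih⟩
    | read s s' a h ha =>
      obtain ⟨u, rfl, hu, q, hq, hp⟩ := ih
      refine ⟨_ ++ u, (List.append_assoc _ _ _).symm, ?_, q, hq, (hpop _ _ _ _).2 ⟨s', h, hp⟩⟩
      simpa [hu] using ha
    | close s h =>
      cases ih
      exact ⟨[], rfl, by simp, s, h, hnil s⟩

lemma evalRel_fin
    (hpop : ∀ p u v q, pop p (u ++ v) q ↔ ∃ p', pop p u p' ∧ pop p' v q) {s : P}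
    {u : List Γ} (hu : bot ∉ u) {q : P} (hq : q ∈ F) (h : pop s u q) :
    EvalRel (Tr bot Δ' start' F' pop F) (.fin s) (u ++ [bot]) .acc := by
  induction u generalizing s with
  | nil =>
    exact .step (a := none) (.read s q none h (by simp))
      (.step (a := some bot) (.close q hq) (.refl _))
  | cons a u ih =>
    simp only [List.mem_cons, not_or] at hu
    obtain ⟨s', h1, h2⟩ := (hpop s [a] u q).1 h
    exact .step (a := some a) (.read s s' (some a) h1 (by simpa using Ne.symm hu.1))
      (ih hu.2 h2)

lemma evalRel_mid {t f : S} {s : P} {y : List Γ} (h : EvalRel Δ' t y f) :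
    EvalRel (Tr bot Δ' start' F' pop F) (.mid t s) y (.mid f s) := by
  induction h with
  | refl => exact .refl _
  | step hs _ ih => exact .step (.sim _ _ _ _ hs) ih

lemma evalRel_ini
    (hpop : ∀ p u v q, pop p (u ++ v) q ↔ ∃ p', pop p u p' ∧ pop p' v q)
    (hnil : ∀ p, pop p [] p) {p : P} {z : List Γ} :
    EvalRel (Tr bot Δ' start' F' pop F) (.ini p) z .acc ↔
      ∃ s y u, z = y ++ (u ++ [bot]) ∧ (∃ f ∈ F', EvalRel Δ' (start' (p, s)) y f) ∧
        bot ∉ u ∧ ∃ q ∈ F, pop s u q := by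
  constructor
  · intro h
    obtain ⟨s, y, z', rfl, h1, u, rfl, h2⟩ := stLang_of_evalRel hpop hnil h
    exact ⟨s, y, u, rfl, h1, h2⟩
  · rintro ⟨s, y, u, rfl, ⟨f, hf, h1⟩, hu, q, hq, h2⟩
    exact .step (a := none) (.guess p s) (evalRel_trans (evalRel_mid h1)
      (.step (a := none) (.switch f s hf) (evalRel_fin hpop hu hq h2)))

end

/-- The states of `St P S` injected into a sum type, for counting. -/
def St.code {P S : Type} : St P S → P ⊕ (S × P) ⊕ P ⊕ Unit
  | .ini p => .inl p
  | .mid t s => .inr (.inl (t, s))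
  | .fin s => .inr (.inr (.inl s))
  | .acc => .inr (.inr (.inr ()))

lemma St.code_injective {P S : Type} : Function.Injective (St.code : St P S → _) := by
  rintro (_ | _ | _ | _) (_ | _ | _ | _) h <;> simp_all [St.code]

lemma St.card_le (P S : Type) [Finite P] [Finite S] :
    Nat.card (St P S) ≤ 2 * Nat.card P + 1 + Nat.card S * Nat.card P := by
  have := Nat.card_le_card_of_injective _ (St.code_injective (P := P) (S := S))
  simp only [Nat.card_sum, Nat.card_prod, Nat.card_unique] at this
  omega

/-- The set of configurations of an ordered system on `k` stacks from which all stacks can be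
emptied while reaching `F` is recognised, uniformly in the starting state, by a finite
automaton.  Each eliminated stack squares the number of control states; the factor `Nat.card P` on
the left of the bound makes the induction go through. -/
theorem exists_automaton {Γ : Type} (bot : Γ) (k : ℕ) :
    ∀ (P : Type) (_ : Finite P) (_ : Nonempty P) (R : Sys P Γ)
      (_ : ∀ p i κ p' α, R p i κ p' α → i < k) (F : Set P),
      ∃ (S : Type) (_ : Finite S) (Δ : S → Option Γ → S → Prop) (start : P → S) (Acc : Set S),
        Nat.card P * Nat.card S ≤ (3 * k + 1) * Nat.card P ^ 2 ^ (k+1) ∧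
        ∀ p z, (∃ f ∈ Acc, EvalRel Δ (start p) z f) ↔
          ∃ w : Fin k → List Γ, (∀ j, bot ∉ w j) ∧ z = enc bot w ∧
            ∃ q ∈ F, Reach k R (p, w) (q, emp) := by
  induction k with
  | zero =>
    intro P _ _ R hR F
    refine ⟨P, inferInstance, fun _ _ _ => False, id, F, by simp [pow_two], fun p z => ?_⟩
    constructor
    · rintro ⟨f, hf, h⟩
      cases h with
      | refl => exact ⟨emp, fun j => j.elim0, by simp [enc], p, hf, .refl⟩
      | step h _ => exact h.elim
    · rintro ⟨w, -, rfl, q, hq, h⟩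
      rcases Relation.ReflTransGen.cases_head h with h | ⟨c, ⟨i, κ, α, h, _⟩, _⟩
      · obtain ⟨rfl, -⟩ := Prod.mk.inj h
        exact ⟨p, hq, by simpa [enc] using EvalRel.refl p⟩
      · exact absurd (hR _ _ _ _ _ h) (by omega)
  | succ k ih =>
    intro P _ _ R hR F
    have hR' : ∀ p i κ p' α, R p i κ p' α → i ≤ k := fun p i κ p' α h => by
      have := hR p i κ p' α h
      omega
    obtain ⟨S', hS', Δ', start', F', hcard, hlang⟩ := ih (P × P) inferInstance inferInstance
      (reduce R k) (fun _ _ _ _ _ h => h.2.1) {c | c.1 = c.2}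
    have hpop : ∀ p u v q, Pop R k p (u ++ v) q ↔ ∃ p', Pop R k p u p' ∧ Pop R k p' v q :=
      fun p u v q => pop_append hR'
    have hnil : ∀ p, Pop R k p [] p := fun p => by rw [Pop, ext_emp_nil]
    refine ⟨St P S', Finite.of_injective _ St.code_injective,
      Tr bot Δ' start' F' (Pop R k) F, .ini, {.acc}, ?_, fun p z => ?_⟩
    · have h1 := St.card_le P S'
      have hm : 0 < Nat.card P := Nat.card_pos
      rw [Nat.card_prod] at hcard
      set m := Nat.card P
      set s := Nat.card S'
      have e : (m * m) ^ 2 ^ (k+1) = m ^ 2 ^ (k+1+1) := by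
        rw [← pow_two, ← pow_mul]; congr 1; ring
      rw [e] at hcard
      have h2 : m ^ 2 ≤ m ^ 2 ^ (k+1+1) :=
        Nat.pow_le_pow_right hm (by
          calc 2 = 2 ^ 1 := rfl
            _ ≤ 2 ^ (k+1+1) := Nat.pow_le_pow_right (by norm_num) (by omega))
      calc m * Nat.card (St P S') ≤ m * (2 * m + 1 + s * m) := Nat.mul_le_mul_left _ h1
        _ = m * m * s + 2 * m ^ 2 + m := by ring
        _ ≤ (3 * k + 1) * m ^ 2 ^ (k+1+1) + 3 * m ^ 2 := by nlinarith
        _ ≤ (3 * (k+1) + 1) * m ^ 2 ^ (k+1+1) := by nlinarith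
    · simp only [Set.mem_singleton_iff, exists_eq_left, evalRel_ini hpop hnil, hlang]
      constructor
      · rintro ⟨s, y, u, rfl, ⟨x, hx, rfl, ⟨p1, p2⟩, hq', hr⟩, hu, q, hq, hp⟩
        simp only [Set.mem_ofPred_eq] at hq'
        subst hq'
        refine ⟨ext x u, ?_, (enc_ext _ _ _).symm, q, hq, (reach_reduce hR').2 ⟨s, p1, hr, hp⟩⟩
        simpa [Fin.forall_fin_succ'] using ⟨hx, hu⟩
      · rintro ⟨w, hw, rfl, q, hq, hr⟩
        obtain ⟨x, u, rfl⟩ := exists_ext w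
        obtain ⟨s, p', hr', hp⟩ := (reach_reduce hR').1 hr
        simp only [Fin.forall_fin_succ', ext_castSucc, ext_last] at hw
        exact ⟨s, enc bot x, u, enc_ext _ _ _, ⟨x, hw.1, rfl, (p', p'), rfl, hr'⟩, hw.2, q, hq, hp⟩


/-! ### From multi-pushdown automata to ordered stack systems -/

/-- The stack contents `w` with a bottom symbol added below each stack. -/
def addBot {Γ : Type} (bot : Γ) {n : ℕ} (w : Fin n → List Γ) : Fin n → List Γ :=
  fun j => w j ++ [bot]

open scoped Classical in
/-- The stack system of an ordered multi-pushdown automaton: popping `⊥` becomes an emptiness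
test.  A transition popping `⊥` from the first `i` stacks and nothing further becomes a rule of
level `i` that pops nothing.  The words `α j` with `j ≥ n` are irrelevant and left arbitrary. -/
def toSys {n : ℕ} {Q A Γ : Type} (M : MPA n Q A Γ) : Sys Q Γ := fun p i κ p' α =>
  ∃ γ a β, M.Δ p γ a p' β ∧ κ ≠ some M.bot ∧
    ∀ j : Fin n, (j < i → γ j = some M.bot) ∧ (j = i → γ j = κ) ∧ (i < j → γ j = none) ∧
      α j = (β j).filter (· ≠ M.bot)

open scoped Classical in
lemma filter_bot {Γ : Type} {bot : Γ} {u : List Γ} (h : bot ∉ u) :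
    u.filter (· ≠ bot) = u := by
  rw [List.filter_eq_self]
  intro a ha
  simpa using fun e : a = bot => h (e ▸ ha)

open scoped Classical in
lemma filter_append_bot {Γ : Type} {bot : Γ} {u : List Γ} (h : bot ∉ u) :
    (u ++ [bot]).filter (· ≠ bot) = u := by
  rw [List.filter_append, filter_bot h]
  simp

section
variable {n : ℕ} {Q A Γ : Type} {M : MPA n Q A Γ}

/-- Steps of the automaton from configurations with proper stack contents are steps of the
stack system, and proper contents are preserved. -/
lemma exists_step_of_stepAny (hWF : M.WF) (hO : M.Ordered) {p p' : Q} {w c' : Fin n → List Γ}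
    (hw : ∀ j, M.bot ∉ w j) (h : M.StepAny (p, addBot M.bot w) (p', c')) :
    ∃ w', (∀ j, M.bot ∉ w' j) ∧ c' = addBot M.bot w' ∧ Step n (toSys M) (p, w) (p', w') := by
  classical
  obtain ⟨a, γ, β, v, hΔ, hv⟩ := h
  have hstack : ∀ j, ∃ v0 w', M.bot ∉ w' ∧ c' j = w' ++ [M.bot] ∧
      w' = (β j).filter (· ≠ M.bot) ++ v0 ∧ (γ j = some M.bot → w j = [] ∧ v0 = []) ∧
      (γ j ≠ some M.bot → w j = (γ j).toList ++ v0) := by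
    intro j
    obtain ⟨h1, h2, -⟩ := hv j
    obtain ⟨-, hnb, hb⟩ := hWF.2 _ _ _ _ _ hΔ j
    have hwj := hw j
    simp only [addBot] at h1 h2
    by_cases hγ : γ j = some M.bot
    · obtain ⟨b, hβ, hbb, -⟩ := hb hγ
      rw [hγ] at h1
      obtain ⟨h3, h4⟩ := append_bot_inj (u' := []) (t' := v j) hwj (by simp) (by simpa using h1)
      refine ⟨[], b, hbb, by rw [h2, hβ, ← h4, List.append_nil], ?_, fun _ => ⟨h3, rfl⟩,
        fun h => absurd hγ h⟩
      rw [hβ, filter_append_bot hbb, List.append_nil]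
    · have hβ := hnb hγ
      obtain ⟨v0, h3, h4⟩ : ∃ v0, w j = (γ j).toList ++ v0 ∧ v j = v0 ++ [M.bot] := by
        rcases hg : γ j with _ | g
        · exact ⟨w j, by simp, by simpa [hg] using h1.symm⟩
        · rw [hg] at h1 hγ
          rcases hwe : w j with _ | ⟨b, w0⟩
          · simp [hwe] at h1
            exact absurd (by rw [h1.1]) hγ
          · simp only [hwe, Option.toList_some, List.cons_append, List.nil_append,
              List.cons.injEq] at h1
            exact ⟨w0, by simp [h1.1], h1.2.symm⟩
      refine ⟨v0, β j ++ v0, ?_, by simp [h2, h4], by rw [filter_bot hβ],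
        fun h => absurd h hγ, fun _ => h3⟩
      rw [h3] at hwj
      simp only [List.mem_append, not_or] at hwj ⊢
      exact ⟨hβ, hwj.2⟩
  choose v0 w' h1 h2 h3 h4 h5 using hstack
  -- If the transition pops `⊥` from its active stack `i0` as well, its level as a rule is `i0 + 1`.
  obtain ⟨i, κ, hκ, hi⟩ : ∃ (i : ℕ) (κ : Option Γ), κ ≠ some M.bot ∧ ∀ j : Fin n,
      (j < i → γ j = some M.bot) ∧ (j = i → γ j = κ) ∧ (i < j → γ j = none) := by
    obtain ⟨i0, hlt, hgt⟩ := hO _ _ _ _ _ hΔ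
    by_cases hb : γ i0 = some M.bot
    · refine ⟨i0 + 1, none, by simp, fun j => ⟨fun hj => ?_, fun hj => ?_, fun hj => ?_⟩⟩
      · rcases (show j ≤ i0 by rw [Fin.le_def]; omega).lt_or_eq with h | rfl
        · exact hlt j h
        · exact hb
      · exact hgt j (by rw [Fin.lt_def]; omega)
      · exact hgt j (by rw [Fin.lt_def]; omega)
    · refine ⟨i0, γ i0, hb, fun j => ⟨fun hj => hlt j hj, fun hj => ?_, fun hj => hgt j hj⟩⟩
      rw [Fin.ext hj]
  refine ⟨w', h1, funext h2, i, κ,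
    fun j => if h : j < n then (β ⟨j, h⟩).filter (· ≠ M.bot) else [],
    ⟨γ, a, β, hΔ, hκ, fun j => ⟨(hi j).1, (hi j).2.1, (hi j).2.2, by simp⟩⟩, fun j => ?_⟩
  obtain ⟨hi1, hi2, hi3⟩ := hi j
  refine ⟨fun hj => (h4 j (hi1 hj)).1, v0 j, ?_, by simpa using h3 j⟩
  rcases lt_trichotomy j.1 i with hj | hj | hj
  · obtain ⟨e1, e2⟩ := h4 j (hi1 hj)
    simp [hj.ne, e1, e2]
  · have := hi2 hj
    simpa [hj, ← this] using h5 j (this ▸ hκ)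
  · have := hi3 hj
    simpa [hj.ne', this] using h5 j (by simp [this])

lemma stepAny_of_step (hWF : M.WF) {p p' : Q} {w w' : Fin n → List Γ}
    (hw : ∀ j, M.bot ∉ w j) (h : Step n (toSys M) (p, w) (p', w')) :
    (∀ j, M.bot ∉ w' j) ∧ M.StepAny (p, addBot M.bot w) (p', addBot M.bot w') := by
  classical
  obtain ⟨i, κ, α, ⟨γ, a, β, hΔ, hκ, hi⟩, hact⟩ := h
  have hstack : ∀ j, ∃ v, M.bot ∉ w' j ∧ w j ++ [M.bot] = (γ j).toList ++ v ∧
      w' j ++ [M.bot] = β j ++ v := by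
    intro j
    obtain ⟨hi1, hi2, hi3, hα⟩ := hi j
    obtain ⟨-, hnb, hb⟩ := hWF.2 _ _ _ _ _ hΔ j
    obtain ⟨hemp, v, h1, h2⟩ := hact j
    have hwj := hw j
    simp only at h1 h2 hemp
    by_cases hj : j.1 < i
    · obtain ⟨b, hβ, hbb, -⟩ := hb (hi1 hj)
      have hwe := hemp hj
      simp only [hwe, hj.ne, if_false, List.nil_append] at h1
      rw [hα, hβ, filter_append_bot hbb, ← h1, List.append_nil] at h2
      exact ⟨[], h2 ▸ hbb, by simp [hwe, hi1 hj], by simp [h2, hβ]⟩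
    · have hγ : γ j = if j.1 = i then κ else none := by
        split_ifs with hji
        · exact hi2 hji
        · exact hi3 (by omega)
      have hγb : γ j ≠ some M.bot := by
        rw [hγ]
        split_ifs
        · exact hκ
        · simp
      have h1' : w j = (γ j).toList ++ v := by
        rw [h1, hγ]
        split_ifs <;> simp
      have hβ := hnb hγb
      rw [hα, filter_bot hβ] at h2
      refine ⟨v ++ [M.bot], ?_, by simp [h1'], by simp [h2]⟩
      rw [h1'] at hwj
      rw [h2]
      simp only [List.mem_append, not_or] at hwj ⊢
      exact ⟨hβ, hwj.2⟩
  choose v h1 h2 h3 using hstack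
  exact ⟨h1, a, γ, β, v, hΔ, fun j => ⟨h2 j, h3 j, w j, rfl, hw j⟩⟩

lemma reach_iff (hWF : M.WF) (hO : M.Ordered) {p q : Q} {w : Fin n → List Γ}
    (hw : ∀ j, M.bot ∉ w j) :
    Relation.ReflTransGen M.StepAny (p, addBot M.bot w) (q, fun _ => [M.bot]) ↔
      Reach n (toSys M) (p, w) (q, emp) := by
  constructor
  · intro h
    generalize hc : (p, addBot M.bot w) = c at h
    induction h using Relation.ReflTransGen.head_induction_on generalizing p w with
    | refl =>
      obtain ⟨rfl, h2⟩ := Prod.mk.inj hc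
      have : w = emp := funext fun j => by
        simpa [addBot, emp] using congrFun h2 j
      rw [this]
    | @head c d hs hr ih =>
      subst hc
      obtain ⟨p1, c1⟩ := d
      obtain ⟨w', h1, rfl, h2⟩ := exists_step_of_stepAny hWF hO hw hs
      exact .head h2 (ih h1 rfl)
  · intro h
    generalize hc : (p, w) = c at h
    induction h using Relation.ReflTransGen.head_induction_on generalizing p w with
    | refl =>
      obtain ⟨rfl, rfl⟩ := Prod.mk.inj hc
      exact .refl
    | @head c d hs hr ih =>
      subst hc
      obtain ⟨p1, w1⟩ := d
      obtain ⟨h1, h2⟩ := stepAny_of_step hWF hw hs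
      exact .head h2 (ih h1 rfl)

end

/-- Transitions of the automaton whose initial states `Sum.inl p` are linked to given entry
points of an automaton with transitions `Δ`. -/
inductive Link {Q S Γ : Type} (Δ : S → Option Γ → S → Prop) (start : Q → S) :
    Q ⊕ S → Option Γ → Q ⊕ S → Prop
  | enter (p : Q) : Link Δ start (.inl p) none (.inr (start p))
  | move (s s' : S) (a : Option Γ) (h : Δ s a s') : Link Δ start (.inr s) a (.inr s')

lemma evalRel_link {Q S Γ : Type} {Δ : S → Option Γ → S → Prop} {start : Q → S} {p : Q} {f : S}
    {z : List Γ} : EvalRel (Link Δ start) (.inl p) z (.inr f) ↔ EvalRel Δ (start p) z f := by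
  have hfwd : ∀ (x y : Q ⊕ S) (z : List Γ), EvalRel (Link Δ start) x z y →
      ∀ s, x = .inr s → y = .inr f → EvalRel Δ s z f := by
    intro x y z h
    induction h with
    | refl =>
      rintro s rfl h
      rw [Sum.inr.inj h]
      exact .refl f
    | step hs _ ih =>
      rintro s rfl hf
      cases hs with
      | move s s' a h => exact .step h (ih _ rfl hf)
  have hbwd : ∀ (s t : S) (z : List Γ), EvalRel Δ s z t →
      EvalRel (Link Δ start) (.inr s) z (.inr t) := by
    intro s t z h
    induction h with
    | refl => exact .refl _
    | step hs _ ih => exact .step (.move _ _ _ hs) ih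
  constructor
  · intro h
    cases h with
    | step hs hr =>
      cases hs with
      | enter => exact hfwd _ _ _ hr _ rfl rfl
  · intro h
    exact .step (a := none) (.enter p) (hbwd _ _ _ h)

/-- The size estimate for an automaton with `m + s` states over `g` letters, where `μ` is the size
of the multi-pushdown automaton and `N` its number of stacks. -/
lemma size_bound {μ m g s N : ℕ} (hN : 1 ≤ N) (hm : 1 ≤ m) (hg : 2 ≤ g) (hμ : N + m + g ≤ μ)
    (hs : m * s ≤ (3 * N + 1) * m ^ 2 ^ (N+1)) :
    (m + s) + g + (m + s) * ((g + 1) * (m + s)) ≤ μ ^ 2 ^ (4 * N) := by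
  have hμ4 : 4 ≤ μ := by omega
  set x := 2 ^ N with hx
  have hx2 : 2 ≤ x := by
    calc 2 = 2 ^ 1 := rfl
      _ ≤ x := Nat.pow_le_pow_right (by norm_num) hN
  have e1 : 2 ^ (N+1) = 2 * x := by rw [hx]; ring
  have e2 : 2 ^ (4 * N) = x ^ 4 := by rw [hx, ← pow_mul, mul_comm]
  rw [e1] at hs
  rw [e2]
  have hs1 : s ≤ μ ^ (2 * x + 2) := by
    calc s ≤ m * s := Nat.le_mul_of_pos_left _ hm
      _ ≤ (3 * N + 1) * m ^ (2 * x) := hs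
      _ ≤ μ ^ 2 * μ ^ (2 * x) := by
        refine Nat.mul_le_mul (by nlinarith) (Nat.pow_le_pow_left (by omega) _)
      _ = μ ^ (2 * x + 2) := by ring
  -- `V` bounds the number of states.
  obtain ⟨V, hV⟩ : ∃ V, V = μ ^ (2 * x + 3) := ⟨_, rfl⟩
  have hms : m + s ≤ V := by
    have : m ≤ μ ^ (2 * x + 2) :=
      (show m ≤ μ by omega).trans (Nat.le_self_pow (by omega) μ)
    calc m + s ≤ 2 * μ ^ (2 * x + 2) := by omega
      _ ≤ μ * μ ^ (2 * x + 2) := Nat.mul_le_mul_right _ (by omega)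
      _ = V := by rw [hV]; ring
  have hμV : μ ≤ V := hV ▸ Nat.le_self_pow (by omega) μ
  calc (m + s) + g + (m + s) * ((g + 1) * (m + s))
      ≤ V + V + V * (μ * V) := by gcongr <;> omega
    _ ≤ μ ^ 2 * V ^ 2 := by nlinarith [Nat.mul_le_mul hμV hμV, Nat.mul_le_mul_left (V * V) hμ4]
    _ = μ ^ (4 * x + 8) := by rw [hV]; ring
    _ ≤ μ ^ x ^ 4 := by
      refine Nat.pow_le_pow_right (by omega) ?_
      have h2 : 4 ≤ x * x := Nat.mul_le_mul hx2 hx2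
      have h3 : 8 * x ≤ x ^ 4 := by
        calc 8 * x = 4 * 2 * x := by ring
          _ ≤ (x * x) * x * x := by gcongr
          _ = x ^ 4 := by ring
      omega

end OrderedStacks

/-- There is a constant `d` such that for every ordered MPA `M` in normal
form and every state `q`, some `M`-automaton `A` with `|A| ≤ |M|^{2^{d·n}}` recognizes
exactly `Pre*_{T(M)}({(q,⊥,…,⊥)})`. -/
theorem ompa_preStar_of_empty_config :
    ∃ d : ℕ, 0 < d ∧
      ∀ (n : ℕ) (Q A Γ : Type) (_ : Finite Q) (_ : Finite A) (_ : Finite Γ)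
        (M : MPA (n+1) Q A Γ), M.WF → M.Ordered → M.NormalForm → ∀ q : Q,
        ∃ (S : Type) (_ : Finite S) (T : MAut Γ Q S),
          T.size ≤ M.size ^ 2 ^ (d * (n+1)) ∧
          {c | MAut.AcceptConf M T c} =
            preStar M.StepAny {d' | d'.1 = q ∧ d'.2 = fun _ => [M.bot]} := by
  open OrderedStacks in
  refine ⟨4, by norm_num, ?_⟩
  intro n Q A Γ _ _ _ M hWF hO _ q
  obtain ⟨S, hS, Δ, start, Acc, hcard, hlang⟩ := exists_automaton M.bot (n+1) Q inferInstance ⟨q⟩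
    (fun p i κ p' α => toSys M p i κ p' α ∧ i < n+1) (fun _ _ _ _ _ h => h.2)
    {q' | ∃ q'' ∈ ({q} : Set Q), Reach (n+1) (toSys M) (q', emp) (q'', emp)}
  refine ⟨S, hS, ⟨Link Δ start, Sum.inr '' Acc⟩, ?_, ?_⟩
  · have hQ : 1 ≤ Nat.card Q := by
      have : Nonempty Q := ⟨q⟩
      exact Nat.card_pos
    have hΓ : 2 ≤ Nat.card Γ := by
      have : Nontrivial Γ := ⟨⟨_, _, hWF.1⟩⟩
      exact Finite.one_lt_card
    have hμ : (n + 1) + Nat.card Q + Nat.card Γ ≤ M.size := by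
      unfold MPA.size
      omega
    refine le_trans ?_ (size_bound (by omega) hQ hΓ hμ hcard)
    have ht := Finite.card_subtype_le (fun t : (Q ⊕ S) × Option Γ × (Q ⊕ S) =>
      Link Δ start t.1 t.2.1 t.2.2)
    simp only [Nat.card_prod, Nat.card_sum, Finite.card_option] at ht
    simp only [MAut.size, Nat.card_sum]
    omega
  · have hacc : ∀ p z, (∃ f ∈ Sum.inr '' Acc, EvalRel (Link Δ start) (.inl p) z f) ↔
        ∃ w : Fin (n+1) → List Γ, (∀ j, M.bot ∉ w j) ∧ z = enc M.bot w ∧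
          Reach (n+1) (toSys M) (p, w) (q, emp) := by
      intro p z
      have h := hlang p z
      simp only [Set.mem_ofPred_eq, ← reach_restrict] at h
      simp only [Set.mem_singleton_iff, exists_eq_left] at h
      rw [← h]
      simp [evalRel_link]
    ext ⟨p, c⟩
    simp only [Set.mem_ofPred_eq, MAut.AcceptConf, preStar, hacc, Prod.exists]
    constructor
    · rintro ⟨hc, w, hw, hz, hr⟩
      choose w' h1 h2 using hc
      obtain rfl : c = addBot M.bot w' := funext h1
      obtain rfl := enc_inj h2 hw hz
      exact ⟨q, _, ⟨rfl, rfl⟩, (reach_iff hWF hO hw).2 hr⟩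
    · rintro ⟨q', c', ⟨rfl, rfl⟩, h⟩
      have hc : ∀ j, MPA.IsStack M.bot (c j) := by
        rcases Relation.ReflTransGen.cases_head h with h | ⟨d, ⟨a, γ, α, v, _, hv⟩, _⟩
        · obtain ⟨rfl, rfl⟩ := Prod.mk.inj h
          exact fun j => ⟨[], rfl, by simp⟩
        · exact fun j => (hv j).2.2
      refine ⟨hc, ?_⟩
      choose w h1 h2 using hc
      obtain rfl : c = addBot M.bot w := funext h1
      exact ⟨w, h2, rfl, (reach_iff hWF hO h2).1 h⟩
end
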